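/- Let G be a finite pseudo-solvable group and let p be a prime with p ∉ {2,3,5} such that p, 3, and 5 all divide |G| and G has no element of order 3p, no element of order 5p, and no element of order 15. Suppose there exists an odd prime q dividing |G| such that G has no element of order 2q. Then for every prime r dividing |G| with r ∉ {2,3,5}: if G has no element of order 3r and no element of order 5r, then G also has no element of order 2r. (Equivalently, the subgraph of the complement of the prime graph on {r,2,3,5} having edges 3–5, 3–r, 5–r but not 2–r cannot occur together with any edge 2–q.) -/

import Mathlib

/-- A finite group is *pseudo-solvable* if it has a subnormal series whose factors are
all cyclic or isomorphic to the alternating group `A₅`. -/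
def IsPseudoSolvable (G : Type*) [Group G] : Prop :=
  ∃ (n : ℕ) (H : Fin (n + 1) → Subgroup G),
    H 0 = ⊥ ∧ H (Fin.last n) = ⊤ ∧
    ∀ i : Fin n, H i.castSucc ≤ H i.succ ∧
      ∃ hN : ((H i.castSucc).subgroupOf (H i.succ)).Normal,
        haveI := hN
        IsCyclic (H i.succ ⧸ (H i.castSucc).subgroupOf (H i.succ)) ∨
        Nonempty ((H i.succ ⧸ (H i.castSucc).subgroupOf (H i.succ)) ≃* alternatingGroup (Fin 5))


theorem ex_ord {G : Type*} [Group G] [Finite G] {g : G} {m : ℕ} (h : m ∣ orderOf g) :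
    ∃ k : ℕ, orderOf (g ^ k) = m := by
  obtain ⟨k, hk⟩ := h
  have hpos := orderOf_pos g
  refine ⟨k, ?_⟩
  have hk0 : k ≠ 0 := by rintro rfl; rw [mul_zero] at hk; omega
  rw [orderOf_pow_of_dvd hk0 ⟨m, by rw [hk, mul_comm]⟩, hk]
  exact Nat.mul_div_cancel _ (Nat.pos_of_ne_zero hk0)

theorem no_comm {G : Type*} [Group G] [Finite G] {a b : ℕ} (hab : a.Coprime b)
    (h : ¬ ∃ g : G, orderOf g = a * b) {x y : G} (hc : Commute x y)
    (hx : a ∣ orderOf x) (hy : b ∣ orderOf y) : False := by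
  obtain ⟨k, hk⟩ := ex_ord hx
  obtain ⟨l, hl⟩ := ex_ord hy
  apply h
  refine ⟨x ^ k * y ^ l, ?_⟩
  rw [(hc.pow_pow k l).orderOf_mul_eq_mul_orderOf_of_coprime (by rw [hk, hl]; exact hab), hk, hl]

theorem no_ord_map {G H : Type*} [Group G] [Finite G] [Group H] (f : G →* H) {m : ℕ}
    (h : ¬ ∃ g : G, orderOf g = m) (g : G) : ¬ m ∣ orderOf (f g) := fun hd => by
  obtain ⟨k, hk⟩ := ex_ord (hd.trans (orderOf_map_dvd f g))
  exact h ⟨_, hk⟩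

theorem no_ord_quot {G : Type*} [Group G] [Finite G] (N : Subgroup G) [N.Normal] {m : ℕ}
    (h : ¬ ∃ g : G, orderOf g = m) : ¬ ∃ g : G ⧸ N, orderOf g = m := by
  rintro ⟨g, hg⟩
  obtain ⟨g, rfl⟩ := QuotientGroup.mk'_surjective N g
  exact no_ord_map (QuotientGroup.mk' N) h g (by rw [hg])

theorem no_ord_inj {G H : Type*} [Group G] [Group H] (f : H →* G) (hf : Function.Injective f)
    {m : ℕ} (h : ¬ ∃ g : G, orderOf g = m) : ¬ ∃ g : H, orderOf g = m := by
  rintro ⟨g, hg⟩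
  exact h ⟨f g, by rw [orderOf_injective f hf, hg]⟩

theorem ord_prime_of_pow {G : Type*} [Group G] {p k : ℕ} (hp : p.Prime) {g : G}
    (h : g ^ p ^ k = 1) (h1 : g ≠ 1) : p ∣ orderOf g := by
  obtain ⟨j, hj, he⟩ := (Nat.dvd_prime_pow hp).1 (orderOf_dvd_of_pow_eq_one h)
  rw [he]
  apply dvd_pow_self
  rintro rfl
  apply h1
  simpa using he

theorem IsPGroup.dvd_ord {G : Type*} [Group G] {p : ℕ} (hp : p.Prime) {P : Subgroup G}
    (h : IsPGroup p P) {g : G} (hg : g ∈ P) (h1 : g ≠ 1) : p ∣ orderOf g := by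
  obtain ⟨k, hk⟩ := h ⟨g, hg⟩
  exact ord_prime_of_pow (k := k) hp (by simpa using congrArg Subtype.val hk) h1

/-- norm of fixed-point-free automorphism is trivial -/
theorem norm_one {N : Type*} [CommGroup N] (y : MulAut N) (c : ℕ) (hy : y ^ c = 1)
    (hf : ∀ n, y n = n → n = 1) (n : N) : ∏ i ∈ Finset.range c, (y ^ i) n = 1 := by
  apply hf
  rw [map_prod]
  have h1 : ∀ i ∈ Finset.range c, y ((y ^ i) n) = (y ^ (i + 1)) n := by
    intro i _
    rw [pow_succ', MulAut.mul_apply]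
  rw [Finset.prod_congr rfl h1]
  have h2 := Finset.prod_range_succ (fun i => (y ^ i) n) c
  have h3 := Finset.prod_range_succ' (fun i => (y ^ i) n) c
  rw [h2, hy] at h3
  simpa using h3.symm

theorem FL {Γ N : Type*} [Group Γ] [CommGroup N] [Finite N] (ρ : Γ →* MulAut N)
    (V : Subgroup Γ) [Finite V] (y : Γ) (c : ℕ) (hc : c.Prime) (hy : y ^ c = 1)
    (hyV : ∀ v ∈ V, y * v * y⁻¹ ∈ V) (hfV : ∀ v ∈ V, y * v * y⁻¹ = v → v = 1)
    (hfN : ∀ n, ρ y n = n → n = 1) (cop : (Nat.card N).Coprime (Nat.card V)) :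
    ∀ v ∈ V, ρ v = 1 := by
  classical
  have := Fintype.ofFinite V
  have hyi : ∀ i : ℕ, ∀ v ∈ V, y ^ i * v * (y ^ i)⁻¹ ∈ V := by
    intro i
    induction i with
    | zero => intro v hv; simpa using hv
    | succ k ih =>
      intro v hv
      have := hyV _ (ih v hv)
      convert this using 1
      rw [pow_succ']; group
  have hinj : ∀ i ∈ Finset.range c, i ≠ 0 → ∀ v ∈ V, y ^ i * v * (y ^ i)⁻¹ = v → v = 1 := by
    intro i hi hi0 v hv h
    apply hfV v hv
    have hci : i.Coprime c := by
      rw [Nat.coprime_comm]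
      exact Nat.coprime_of_lt_prime hi0 (Finset.mem_range.1 hi) hc
    have hco : i.Coprime (orderOf y) := hci.coprime_dvd_right (orderOf_dvd_of_pow_eq_one hy)
    obtain ⟨m, hm⟩ := exists_pow_eq_self_of_coprime hco
    have hcm : Commute (y ^ i) v := by
      rw [mul_inv_eq_iff_eq_mul] at h; exact h
    have : Commute y v := by rw [← hm]; exact hcm.pow_left m
    rw [this.eq]; group
  have hn : ∀ n, ∏ i ∈ Finset.range c, ρ (y ^ i) n = 1 := by
    intro n
    have := norm_one (ρ y) c (by rw [← map_pow, hy, map_one]) hfN n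
    simpa using this
  have key : ∀ n : N, n ^ Nat.card V = ∏ v : V, ρ v n := by
    intro n
    have hL : ∏ i ∈ Finset.range c, ∏ v : V, ρ (v * y ^ i * (v : Γ)⁻¹) n = 1 := by
      rw [Finset.prod_comm]
      apply Finset.prod_eq_one
      intro v _
      have := hn (ρ (v : Γ)⁻¹ n)
      have h2 := congrArg (ρ (v : Γ)) this
      rw [map_prod, map_one] at h2
      rw [← h2]
      apply Finset.prod_congr rfl
      intro i _
      simp [MulAut.mul_apply]
    have hR : ∏ i ∈ Finset.range c, ∏ v : V, ρ (v * y ^ i) n = 1 := by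
      rw [Finset.prod_comm]
      apply Finset.prod_eq_one
      intro v _
      have h2 := congrArg (ρ (v : Γ)) (hn n)
      rw [map_prod, map_one] at h2
      rw [← h2]
      apply Finset.prod_congr rfl
      intro i _
      simp [MulAut.mul_apply]
    obtain ⟨c', rfl⟩ : ∃ c', c = c' + 1 := ⟨c - 1, by have := hc.pos; omega⟩
    rw [Finset.prod_range_succ'] at hL hR
    have hmid : ∏ i ∈ Finset.range c', ∏ v : V, ρ (v * y ^ (i+1) * (v : Γ)⁻¹) n
        = ∏ i ∈ Finset.range c', ∏ v : V, ρ (v * y ^ (i+1)) n := by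
      apply Finset.prod_congr rfl
      intro i hi
      let e : V → V := fun v => v * ⟨_, hyi (i+1) _ (V.inv_mem v.2)⟩
      have he : Function.Injective e := by
        intro v w h
        have h' := congrArg Subtype.val h
        simp only [e, Subgroup.coe_mul] at h'
        have h3 := hinj (i+1) (by simp at hi ⊢; exact hi) (by omega) ((w : Γ)⁻¹ * v)
          (V.mul_mem (V.inv_mem w.2) v.2) ?_
        · ext; rw [inv_mul_eq_one] at h3; exact h3.symm
        · have h4 : (v : Γ) * y ^ (i+1) * (v : Γ)⁻¹ = w * y ^ (i+1) * (w : Γ)⁻¹ := by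
            have h5 := congrArg (fun t => t * y ^ (i+1)) h'
            simpa [mul_assoc] using h5
          have h6 : y ^ (i+1) = (w : Γ)⁻¹ * v * y ^ (i+1) * ((v : Γ)⁻¹ * w) := by
            calc y ^ (i+1) = (w : Γ)⁻¹ * (w * y ^ (i+1) * (w : Γ)⁻¹) * w := by group
              _ = _ := by rw [← h4]; group
          rw [mul_inv_eq_iff_eq_mul]
          nth_rewrite 1 [h6]
          group
      have hb : Function.Bijective e := Finite.injective_iff_bijective.1 he
      rw [← Function.Bijective.prod_comp hb (fun v : V => ρ (v * y ^ (i+1)) n)]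
      apply Finset.prod_congr rfl
      intro v _
      congr 2
      simp [e, mul_assoc]
    rw [hmid] at hL
    have := mul_left_cancel (hL.trans hR.symm)
    simpa [Nat.card_eq_fintype_card] using this
  intro v hv
  ext n
  have hinjp : Function.Injective (fun x : N => x ^ Nat.card V) :=
    (Nat.Coprime.pow_left_bijective cop).1
  apply hinjp
  simp only [MulAut.one_apply]
  rw [← map_pow, key, map_prod]
  have hb : Function.Bijective (fun w : V => (⟨v, hv⟩ : V) * w) := Group.mulLeft_bijective _
  rw [← Function.Bijective.prod_comp hb (fun w : V => ρ w n)]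
  apply Finset.prod_congr rfl
  intro w _
  simp [MulAut.mul_apply]

theorem rankLem {N : Type*} [CommGroup N] (a b : MulAut N) (hab : Commute a b) (c : ℕ)
    (hc : c.Prime) (ha : a ^ c = 1) (hb : b ^ c = 1) (hfb : ∀ n, b n = n → n = 1)
    (hfa : ∀ j : ℕ, ∀ n, (a * b ^ j) n = n → n = 1) (n : N) : n ^ c = 1 := by
  have hbi : ∀ i ∈ Finset.range c, i ≠ 0 → ∀ n, (b ^ i) n = n → n = 1 := by
    intro i hi hi0 n h
    apply hfb
    have hci : i.Coprime c := by
      rw [Nat.coprime_comm]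
      exact Nat.coprime_of_lt_prime hi0 (Finset.mem_range.1 hi) hc
    have hco : i.Coprime (orderOf b) := hci.coprime_dvd_right (orderOf_dvd_of_pow_eq_one hb)
    obtain ⟨m, hm⟩ := exists_pow_eq_self_of_coprime hco
    have : ∀ m : ℕ, ((b ^ i) ^ m) n = n := by
      intro m
      induction m with
      | zero => simp
      | succ k ih => rw [pow_succ, MulAut.mul_apply, h, ih]
    rw [← hm]; exact this m
  have h1 : ∏ j ∈ Finset.range c, ∏ i ∈ Finset.range c, ((a * b ^ j) ^ i) n = 1 := by
    apply Finset.prod_eq_one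
    intro j _
    apply norm_one _ _ _ (hfa j)
    rw [(hab.pow_right j).mul_pow, ha, ← pow_mul, mul_comm, pow_mul, hb]; simp
  rw [Finset.prod_comm] at h1
  obtain ⟨c', rfl⟩ : ∃ c', c = c' + 1 := ⟨c - 1, by have := hc.pos; omega⟩
  rw [Finset.prod_range_succ'] at h1
  have h2 : ∏ i ∈ Finset.range c', ∏ j ∈ Finset.range (c'+1), ((a * b ^ j) ^ (i+1)) n = 1 := by
    apply Finset.prod_eq_one
    intro i hi
    have h3 := norm_one (b ^ (i+1)) (c'+1) (by rw [← pow_mul, mul_comm, pow_mul, hb, one_pow])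
      (hbi (i+1) (by simpa using hi) (by omega)) n
    have h4 := congrArg (a ^ (i+1)) h3
    rw [map_prod, map_one] at h4
    rw [← h4]
    apply Finset.prod_congr rfl
    intro j _
    rw [(hab.pow_right j).mul_pow, ← pow_mul, ← pow_mul, mul_comm j, MulAut.mul_apply]
  rw [h2] at h1
  simpa using h1


abbrev A5 := alternatingGroup (Fin 5)

theorem A5_card : Nat.card A5 = 60 := by
  rw [nat_card_alternatingGroup]; simp [Nat.factorial]

theorem A5_center : Subgroup.center A5 = ⊥ := alternatingGroup.center_eq_bot (by simp)

theorem A5_conj_inj : Function.Injective (MulAut.conj : A5 →* MulAut A5) := by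
  rw [injective_iff_map_eq_one]
  intro a ha
  have : a ∈ Subgroup.center A5 := by
    rw [Subgroup.mem_center_iff]
    intro g
    have := DFunLike.congr_fun ha g
    simp only [MulAut.conj_apply, MulAut.one_apply] at this
    rw [mul_inv_eq_iff_eq_mul] at this
    exact this.symm
  rw [A5_center] at this
  exact this

theorem A5_perfect : commutator A5 = ⊤ := commutator_alternatingGroup_eq_top (by simp)

instance A5_simple : IsSimpleGroup A5 := by infer_instance

theorem A5_not_solvable : ¬ Group.IsSolvable A5 := by
  intro h
  have := Group.IsSolvable.commutator_lt_top_of_nontrivial A5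
  rw [A5_perfect] at this
  exact lt_irrefl _ this

def v4b : A5 := ⟨Equiv.swap 0 1 * Equiv.swap 2 3, by rw [Equiv.Perm.mem_alternatingGroup]; decide⟩
def v4c : A5 := ⟨Equiv.swap 0 2 * Equiv.swap 1 3, by rw [Equiv.Perm.mem_alternatingGroup]; decide⟩
def v4a : A5 := ⟨Equiv.swap 0 1 * Equiv.swap 1 2, by rw [Equiv.Perm.mem_alternatingGroup]; decide⟩

set_option maxRecDepth 100000 in
theorem A5_V4 : ∃ (V : Subgroup A5) (a b : A5), b ∈ V ∧ b ≠ 1 ∧ (∀ v ∈ V, v * v = 1) ∧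
    (∀ v ∈ V, a * v * a⁻¹ ∈ V) ∧ (∀ v ∈ V, (v * a) ^ 3 = 1) ∧
    (∀ v ∈ V, v * a * b * (v * a)⁻¹ ≠ b) ∧ (∀ v ∈ V, ∀ w ∈ V, v * w = w * v) := by
  have hm : ∀ g : A5, g ∈ ({1, v4b, v4c, v4b * v4c} : Finset A5) ↔
    (g = 1 ∨ g = v4b ∨ g = v4c ∨ g = v4b * v4c) := by intro g; simp
  refine ⟨{ carrier := {g | g = 1 ∨ g = v4b ∨ g = v4c ∨ g = v4b * v4c}
            mul_mem' := ?_
            one_mem' := Or.inl rfl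
            inv_mem' := ?_ }, v4a, v4b, Or.inr (Or.inl rfl), by decide, ?_, ?_, ?_, ?_, ?_⟩
  · rintro a b (rfl|rfl|rfl|rfl) (rfl|rfl|rfl|rfl) <;> (show _ ∨ _ ∨ _ ∨ _) <;> decide
  · rintro a (rfl|rfl|rfl|rfl) <;> (show _ ∨ _ ∨ _ ∨ _) <;> decide
  · rintro a (rfl|rfl|rfl|rfl) <;> decide
  · rintro a (rfl|rfl|rfl|rfl) <;> (show _ ∨ _ ∨ _ ∨ _) <;> decide
  · rintro a (rfl|rfl|rfl|rfl) <;> decide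
  · rintro a (rfl|rfl|rfl|rfl) <;> decide
  · rintro a (rfl|rfl|rfl|rfl) b (rfl|rfl|rfl|rfl) <;> decide

theorem frat {D : Type*} [Group D] [Finite D] (W : Subgroup D) (p : ℕ) [Fact p.Prime]
    (S : Sylow p W) (x : D) (hx : ∀ w ∈ W, x * w * x⁻¹ ∈ W) :
    ∃ w ∈ W, ∀ t ∈ (S : Subgroup W).map W.subtype,
      (w * x) * t * (w * x)⁻¹ ∈ (S : Subgroup W).map W.subtype := by
  let f : W →* W := ((MulAut.conj x).toMonoidHom.comp W.subtype).codRestrict W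
    (fun w => by simpa using hx w w.2)
  have hf : ∀ w : W, (f w : D) = x * w * x⁻¹ := fun w => by simp [f]
  have hp : IsPGroup p ((S : Subgroup W).map f) := S.2.map f
  obtain ⟨Q, hQ⟩ := hp.exists_le_sylow
  obtain ⟨g, rfl⟩ := MulAction.exists_smul_eq W S Q
  refine ⟨(g : D)⁻¹, W.inv_mem g.2, ?_⟩
  rintro t ⟨s, hs, rfl⟩
  have h1 : f s ∈ ((g • S : Sylow p W) : Subgroup W) := hQ ⟨s, hs, rfl⟩
  rw [Sylow.coe_subgroup_smul, Subgroup.mem_pointwise_smul_iff_inv_smul_mem] at h1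
  refine ⟨_, h1, ?_⟩
  simp [MulAut.smul_def, ← map_inv, MulAut.conj_apply, hf, mul_assoc]

theorem FinL {D N : Type*} [Group D] [Finite D] [CommGroup N] [Finite N] (φ : D →* A5)
    (hφ : Function.Surjective φ) (ρ : D →* MulAut N) (hk : ρ.ker ≤ φ.ker)
    (h3 : ¬ 3 ∣ Nat.card φ.ker) (hN : (Nat.card N).Coprime 2)
    (hf3 : ∀ d : D, orderOf d = 3 → ∀ n, ρ d n = n → n = 1)
    (H : ∀ T : Subgroup D, IsPGroup 2 T → ∀ s ∈ T, ∀ t ∈ T, Commute (φ s) (φ t) →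
      φ s * φ s = 1 → Commute (ρ s) (ρ t)) : False := by
  obtain ⟨V, a, b, hb, hb1, hV2, haV, ha3, hab, hVc⟩ := A5_V4
  have : Fact (Nat.Prime 2) := ⟨Nat.prime_two⟩
  obtain ⟨x0, hx0⟩ := hφ a
  obtain ⟨w0, hw0⟩ := hφ b
  let W := V.comap φ
  -- two-part of w0
  obtain ⟨e, m, hm, hem⟩ := Nat.exists_eq_two_pow_mul_odd (n := orderOf w0) (orderOf_pos w0).ne'
  have hbm : φ (w0 ^ m) = b := by
    obtain ⟨l, rfl⟩ := hm
    rw [map_pow, hw0, pow_succ, pow_mul, pow_two, hV2 b hb]; simp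
  let w1 : W := ⟨w0 ^ m, by change φ (w0 ^ m) ∈ V; rw [hbm]; exact hb⟩
  have hw1 : IsPGroup 2 (Subgroup.zpowers w1) := by
    rintro ⟨g, k, rfl⟩
    refine ⟨e, ?_⟩
    ext
    simp only [w1, Subgroup.coe_pow, Subgroup.coe_zpow, Subgroup.coe_one]
    rw [← zpow_natCast, ← zpow_mul, mul_comm, zpow_mul, zpow_natCast, ← pow_mul, mul_comm m, ← hem]
    simp [pow_orderOf_eq_one]
  obtain ⟨S, hS⟩ := hw1.exists_le_sylow
  let T : Subgroup D := (S : Subgroup W).map W.subtype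
  have hT2 : IsPGroup 2 T := S.2.map _
  have hTW : ∀ t ∈ T, φ t ∈ V := by rintro t ⟨s, hs, rfl⟩; exact s.2
  have hwT : w0 ^ m ∈ T := ⟨w1, hS (Subgroup.mem_zpowers _), rfl⟩
  obtain ⟨w, hw, hwx⟩ := frat W 2 S x0 (by
    intro w hw
    change φ _ ∈ V
    simpa [hx0] using haV _ hw)
  set x1 := w * x0 with hx1
  have hφx1 : φ x1 = φ w * a := by rw [hx1, map_mul, hx0]
  have hφx3 : φ x1 ^ 3 = 1 := by rw [hφx1]; exact ha3 _ hw
  set k := Nat.card φ.ker with hkdef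
  have hx13 : x1 ^ 3 ∈ φ.ker := by rw [MonoidHom.mem_ker, map_pow, hφx3]
  have hx13k : (x1 ^ 3) ^ k = 1 := by
    have := pow_card_eq_one' (G := φ.ker) (x := ⟨x1 ^ 3, hx13⟩)
    exact congrArg Subtype.val this
  set x := x1 ^ (k * k) with hx
  have hx3 : x ^ 3 = 1 := by
    rw [hx, ← pow_mul, mul_comm, pow_mul, pow_mul, hx13k, one_pow]
  have hφx : φ x = φ x1 := by
    rw [hx, map_pow]
    have : k * k % 3 = 1 := by
      have : k % 3 = 1 ∨ k % 3 = 2 := by omega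
      rcases this with h | h <;> simp [Nat.mul_mod, h]
    rw [← Nat.div_add_mod (k * k) 3, this, pow_add, pow_mul, hφx3]; simp
  have hxT : ∀ t ∈ T, x * t * x⁻¹ ∈ T := by
    have : ∀ j : ℕ, ∀ t ∈ T, x1 ^ j * t * (x1 ^ j)⁻¹ ∈ T := by
      intro j
      induction j with
      | zero => intro t ht; simpa using ht
      | succ j ih =>
        intro t ht
        have := hwx _ (ih t ht)
        convert this using 1
        rw [pow_succ']; group
    exact this _
  have hxb : φ x * b * (φ x)⁻¹ ≠ b := by rw [hφx, hφx1]; exact hab _ hw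
  have hxo : orderOf x = 3 := by
    have : Fact (Nat.Prime 3) := ⟨Nat.prime_three⟩
    apply orderOf_eq_prime hx3
    intro h; apply hxb; rw [h]; simp
  have hTc : ∀ s ∈ T, ∀ t ∈ T, Commute (ρ s) (ρ t) := fun s hs t ht =>
    H T hT2 s hs t ht (hVc _ (hTW s hs) _ (hTW t ht)) (hV2 _ (hTW s hs))
  set y := ρ x with hy
  have hy3 : y ^ 3 = 1 := by rw [hy, ← map_pow, hx3, map_one]
  let TT := T.map ρ
  have hTTc : ∀ s ∈ TT, ∀ t ∈ TT, s * t = t * s := by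
    rintro _ ⟨s, hs, rfl⟩ _ ⟨t, ht, rfl⟩; exact hTc s hs t ht
  have hyT : ∀ s ∈ TT, y * s * y⁻¹ ∈ TT := by
    rintro _ ⟨s, hs, rfl⟩; exact ⟨_, hxT s hs, by simp [hy]⟩
  have hTT2 : IsPGroup 2 TT := hT2.map ρ
  let VV : Subgroup (MulAut N) :=
    { carrier := {v | ∃ s ∈ TT, v = (y * s * y⁻¹) * s⁻¹}
      one_mem' := ⟨1, TT.one_mem, by simp⟩
      mul_mem' := by
        rintro _ _ ⟨s, hs, rfl⟩ ⟨t, ht, rfl⟩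
        refine ⟨s * t, TT.mul_mem hs ht, ?_⟩
        have h1 := hTTc _ (hyT t ht) _ (TT.inv_mem hs)
        have h2 := hTTc _ (TT.inv_mem hs) _ (TT.inv_mem ht)
        calc y * s * y⁻¹ * s⁻¹ * (y * t * y⁻¹ * t⁻¹)
            = y * s * y⁻¹ * (s⁻¹ * (y * t * y⁻¹)) * t⁻¹ := by group
          _ = y * s * y⁻¹ * (y * t * y⁻¹) * (s⁻¹ * t⁻¹) := by rw [← h1]; group
          _ = _ := by rw [h2]; group
      inv_mem' := by
        rintro _ ⟨s, hs, rfl⟩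
        refine ⟨s⁻¹, TT.inv_mem hs, ?_⟩
        have h1 := hTTc _ (hyT _ (TT.inv_mem hs)) _ hs
        rw [inv_inv, h1]; group }
  have hVT : VV ≤ TT := by
    rintro _ ⟨s, hs, rfl⟩; exact TT.mul_mem (hyT s hs) (TT.inv_mem hs)
  have hVV2 : IsPGroup 2 VV := hTT2.to_le hVT
  have hfin := FL (MonoidHom.id (MulAut N)) VV y 3 Nat.prime_three hy3 ?_ ?_ ?_ ?_
  · have := hfin (y * ρ (w0 ^ m) * y⁻¹ * (ρ (w0 ^ m))⁻¹) ⟨_, ⟨_, hwT, rfl⟩, rfl⟩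
    simp only [MonoidHom.id_apply] at this
    have h2 : x * (w0 ^ m) * x⁻¹ * (w0 ^ m)⁻¹ ∈ ρ.ker := by
      rw [MonoidHom.mem_ker, ← this]; simp [hy]
    have h3 := hk h2
    rw [MonoidHom.mem_ker, map_mul, map_mul, map_mul, map_inv, map_inv, hbm] at h3
    exact hxb (mul_inv_eq_one.1 h3)
  · rintro _ ⟨s, hs, rfl⟩
    exact ⟨_, hyT s hs, by group⟩
  · rintro v ⟨s, hs, hv⟩ hfix
    have hvT : v ∈ TT := hVT ⟨s, hs, hv⟩
    have hs1 := hyT s hs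
    have hs2 := hyT _ hs1
    have hv3 : v ^ 3 = 1 := by
      have e1 : v = (y * (y * s * y⁻¹) * y⁻¹) * (y * s * y⁻¹)⁻¹ := by
        rw [← hfix, hv]; group
      have e2 : v = s * (y * (y * s * y⁻¹) * y⁻¹)⁻¹ := by
        have : s = y * (y * (y * s * y⁻¹) * y⁻¹) * y⁻¹ := by
          calc s = y ^ 3 * s * (y ^ 3)⁻¹ := by rw [hy3]; simp
            _ = _ := by simp [pow_succ, mul_assoc]
        nth_rewrite 1 [this]
        rw [← hfix, e1]; group
      calc v ^ 3 = v * v * v := by simp [pow_succ]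
        _ = (s * (y * (y * s * y⁻¹) * y⁻¹)⁻¹) * ((y * (y * s * y⁻¹) * y⁻¹) * (y * s * y⁻¹)⁻¹)
            * ((y * s * y⁻¹) * s⁻¹) := by rw [← e1, ← e2, ← hv]
        _ = 1 := by group
    by_contra hne
    have h2 := IsPGroup.dvd_ord Nat.prime_two hTT2 hvT hne
    have := h2.trans (orderOf_dvd_of_pow_eq_one hv3)
    omega
  · exact hf3 x hxo
  · obtain ⟨j, hj⟩ := IsPGroup.iff_card.1 hVV2
    rw [hj]; exact hN.pow_right j


theorem mem_norm_of {G : Type*} [Group G] [Finite G] {S : Subgroup G} {x : G}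
    (h : ∀ t ∈ S, x * t * x⁻¹ ∈ S) : x ∈ Subgroup.normalizer (S : Set G) := by
  rw [Subgroup.mem_normalizer_iff]
  intro t
  refine ⟨h t, fun ht => ?_⟩
  let f : S → S := fun t => ⟨x * t * x⁻¹, h t t.2⟩
  have hf : Function.Injective f := by
    intro a b hab
    have := congrArg Subtype.val hab
    simpa [f] using this
  obtain ⟨s, hs⟩ := (Finite.injective_iff_surjective.1 hf) ⟨_, ht⟩
  have := congrArg Subtype.val hs
  simp only [f, mul_left_inj, mul_right_inj] at this
  rw [← this]; exact s.2

theorem min_sylow {D : Type*} [Group D] [Finite D] (φ : D →* A5)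
    (hφ : Function.Surjective φ) (hmin : ∀ K : Subgroup D, K.map φ = ⊤ → K = ⊤)
    (l : ℕ) (hl : l.Prime) : ∃ S : Subgroup D, S.Normal ∧ S ≤ φ.ker ∧ IsPGroup l S ∧
      (∀ g ∈ φ.ker, (∃ k : ℕ, g ^ l ^ k = 1) → g ∈ S) := by
  have : Fact l.Prime := ⟨hl⟩
  let P : Sylow l φ.ker := default
  let S : Subgroup D := (P : Subgroup φ.ker).map φ.ker.subtype
  have hSn : S.Normal := by
    rw [← Subgroup.normalizer_eq_top_iff]
    apply hmin
    rw [eq_top_iff]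
    rintro a -
    obtain ⟨d, rfl⟩ := hφ a
    obtain ⟨w, hw, h⟩ := frat φ.ker l P d (fun w hw => (inferInstance : φ.ker.Normal).conj_mem w hw d)
    refine ⟨w * d, mem_norm_of h, ?_⟩
    rw [map_mul, MonoidHom.mem_ker.1 hw, one_mul]
  refine ⟨S, hSn, ?_, P.2.map _, ?_⟩
  · rintro _ ⟨s, -, rfl⟩; exact s.2
  · rintro g hg ⟨k, hk⟩
    let g' : φ.ker := ⟨g, hg⟩
    have hp : IsPGroup l (Subgroup.zpowers g') := by
      rintro ⟨x, j, rfl⟩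
      refine ⟨k, ?_⟩
      ext
      simp only [g', Subgroup.coe_pow, Subgroup.coe_zpow, Subgroup.coe_one]
      rw [← zpow_natCast, ← zpow_mul, mul_comm, zpow_mul, zpow_natCast, hk, one_zpow]
    obtain ⟨Q, hQ⟩ := hp.exists_le_sylow
    obtain ⟨x, rfl⟩ := MulAction.exists_smul_eq φ.ker P Q
    have h1 := hQ (Subgroup.mem_zpowers g')
    rw [Sylow.coe_subgroup_smul, Subgroup.mem_pointwise_smul_iff_inv_smul_mem] at h1
    have h2 : (x : D)⁻¹ * g * (x : D) ∈ S :=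
      ⟨_, h1, by simp [MulAut.smul_def, ← map_inv, MulAut.conj_apply, g']⟩
    have h3 := hSn.conj_mem _ h2 x
    convert h3 using 1; group

theorem min_normal {D : Type*} [Group D] (φ : D →* A5)
    (hφ : Function.Surjective φ) (hmin : ∀ K : Subgroup D, K.map φ = ⊤ → K = ⊤)
    (X : Subgroup D) (hX : X.Normal) (x : D) (hx : x ∈ X) (h1 : φ x ≠ 1) : X = ⊤ := by
  apply hmin
  have : (X.map φ).Normal := hX.map φ hφ
  rcases this.eq_bot_or_eq_top with h | h
  · exfalso
    apply h1
    have : φ x ∈ X.map φ := ⟨x, hx, rfl⟩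
    rw [h] at this; exact this
  · exact h

theorem min_perfect {D : Type*} [Group D] (φ : D →* A5)
    (hφ : Function.Surjective φ) (hmin : ∀ K : Subgroup D, K.map φ = ⊤ → K = ⊤) :
    commutator D = ⊤ := by
  apply hmin
  rw [commutator_def, Subgroup.map_commutator, ← MonoidHom.range_eq_map,
    MonoidHom.range_eq_top.2 hφ, ← commutator_def, A5_perfect]

theorem card_dvd_of {D : Type*} [Group D] [Finite D] (φ : D →* A5)
    (hφ : Function.Surjective φ) : 60 ∣ Nat.card D := by
  rw [← A5_card]; exact Subgroup.card_dvd_of_surjective φ hφ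

theorem ker_le {D N : Type*} [Group D] [Finite D] [Group N] [Nontrivial N] (φ : D →* A5)
    (hφ : Function.Surjective φ) (hmin : ∀ K : Subgroup D, K.map φ = ⊤ → K = ⊤)
    (ρ : D →* MulAut N)
    (hf3 : ∀ d : D, orderOf d = 3 → ∀ n, ρ d n = n → n = 1) : ρ.ker ≤ φ.ker := by
  intro x hx
  by_contra h
  have := min_normal φ hφ hmin ρ.ker inferInstance x hx h
  have h3 : Fact (Nat.Prime 3) := ⟨Nat.prime_three⟩
  obtain ⟨d, hd⟩ := exists_prime_orderOf_dvd_card' (G := D) 3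
    ((by norm_num : 3 ∣ 60).trans (card_dvd_of φ hφ))
  obtain ⟨n, hn⟩ := exists_ne (1 : N)
  apply hn
  apply hf3 d hd
  have h4 : d ∈ ρ.ker := by rw [this]; trivial
  rw [MonoidHom.mem_ker.1 h4]; rfl

theorem triv_sylow {D N : Type*} [Group D] [Finite D] [CommGroup N] [Finite N] (φ : D →* A5)
    (hφ : Function.Surjective φ)
    (ρ : D →* MulAut N) (a b : ℕ) (ha : a.Prime) (hb : b.Prime) (hab : a ≠ b) (hb60 : b ∣ 60)
    (hN : (Nat.card N).Coprime a)
    (hfb : ∀ d : D, orderOf d = b → ∀ n, ρ d n = n → n = 1)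
    (hno : ¬ ∃ d : D, orderOf d = a * b) (S : Subgroup D) (hS : S.Normal) (hSp : IsPGroup a S) :
    ∀ s ∈ S, ρ s = 1 := by
  have : Fact b.Prime := ⟨hb⟩
  have : Fact a.Prime := ⟨ha⟩
  obtain ⟨y, hy⟩ := exists_prime_orderOf_dvd_card' (G := D) b (hb60.trans (card_dvd_of φ hφ))
  apply FL ρ S y b hb (by rw [← hy]; exact pow_orderOf_eq_one y)
    (fun v hv => hS.conj_mem v hv y) ?_ (hfb y hy) ?_
  · intro v hv h
    by_contra hne
    rw [mul_inv_eq_iff_eq_mul] at h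
    exact no_comm ((Nat.coprime_primes ha hb).2 hab) hno (x := v) (y := y) h.symm
      (IsPGroup.dvd_ord ha hSp hv hne) (by rw [hy])
  · obtain ⟨j, hj⟩ := IsPGroup.iff_card.1 hSp
    rw [hj]; exact hN.pow_right j

theorem not_dvd_ker {D N : Type*} [Group D] [Finite D] [CommGroup N] [Finite N] [Nontrivial N]
    (φ : D →* A5)
    (hφ : Function.Surjective φ) (hmin : ∀ K : Subgroup D, K.map φ = ⊤ → K = ⊤)
    (ρ : D →* MulAut N) (a b : ℕ) (ha : a.Prime) (hb : b.Prime) (hab : a ≠ b) (hb60 : b ∣ 60)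
    (hN : (Nat.card N).Coprime a)
    (hfa : ∀ d : D, orderOf d = a → ∀ n, ρ d n = n → n = 1)
    (hfb : ∀ d : D, orderOf d = b → ∀ n, ρ d n = n → n = 1)
    (hno : ¬ ∃ d : D, orderOf d = a * b) : ¬ a ∣ Nat.card φ.ker := by
  intro hd
  have : Fact a.Prime := ⟨ha⟩
  obtain ⟨S, hSn, hSk, hSp, hS⟩ := min_sylow φ hφ hmin a ha
  have htr := triv_sylow φ hφ ρ a b ha hb hab hb60 hN hfb hno S hSn hSp
  obtain ⟨g, hg⟩ := exists_prime_orderOf_dvd_card' (G := φ.ker) a hd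
  have hg' : orderOf (g : D) = a := by rw [Subgroup.orderOf_coe, hg]
  have hgS : (g : D) ∈ S := hS g g.2 ⟨1, by rw [pow_one, ← hg']; exact pow_orderOf_eq_one _⟩
  obtain ⟨n, hn⟩ := exists_ne (1 : N)
  apply hn
  apply hfa g hg'
  rw [htr _ hgS]; rfl


theorem comm_conj {G : Type*} [Group G] {g y t : G} (h : Commute y (g⁻¹ * t * g⁻¹⁻¹)) :
    Commute (g * y * g⁻¹) t := by
  have h2 := h.eq
  have : g * y * g⁻¹ * t = g * (y * (g⁻¹ * t * g⁻¹⁻¹)) * g⁻¹ := by group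
  change _ = _
  rw [this, h2]; group

theorem sq_nonsq {A : Type*} [CommGroup A] [Finite A]
    (hU : ∀ s t : A, s * s = 1 → t * t = 1 → s ≠ 1 → t ≠ 1 → s = t)
    (a b : A) (ha : ¬ ∃ c, a = c * c) (hb : ¬ ∃ c, b = c * c) : ∃ c, a * b = c * c := by
  classical
  let f : A →* A := { toFun := fun c => c * c, map_one' := by simp,
                      map_mul' := fun x y => mul_mul_mul_comm x y x y }
  have hk : Nat.card f.ker ≤ 2 := by
    have : Function.Injective (fun s : f.ker => decide ((s : A) = 1)) := by
      intro s t h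
      simp only [decide_eq_decide] at h
      by_cases h1 : (s : A) = 1
      · exact Subtype.ext (h1.trans (h.1 h1).symm)
      · exact Subtype.ext (hU _ _ s.2 t.2 h1 (fun h2 => h1 (h.2 h2)))
    simpa using Nat.card_le_card_of_injective _ this
  have hi : f.range.index ≤ 2 := by
    have h1 := f.ker.card_mul_index
    have h2 := f.range.card_mul_index
    rw [Subgroup.index_ker] at h1
    have h3 : Nat.card f.range * f.range.index = Nat.card f.range * Nat.card f.ker := by
      rw [h2, ← h1, mul_comm]
    have h4 : 0 < Nat.card f.range := Nat.card_pos
    rw [Nat.eq_of_mul_eq_mul_left h4 h3]; exact hk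
  have hra : ∀ x, x ∈ f.range ↔ ∃ c, x = c * c := by
    intro x; constructor
    · rintro ⟨c, rfl⟩; exact ⟨c, rfl⟩
    · rintro ⟨c, rfl⟩; exact ⟨c, rfl⟩
  rw [← hra] at ha hb ⊢
  have h0 : f.range.index ≠ 0 := Subgroup.index_ne_zero_of_finite
  have h1 : f.range.index ≠ 1 := by
    intro h; rw [Subgroup.index_eq_one] at h; exact ha (h ▸ Subgroup.mem_top a)
  have h2 : f.range.index = 2 := by omega
  rw [Subgroup.mul_mem_iff_of_index_two h2]
  exact iff_of_false ha hb

theorem Scent {D : Type*} [Group D] [Finite D] (φ : D →* A5)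
    (hφ : Function.Surjective φ) (hmin : ∀ K : Subgroup D, K.map φ = ⊤ → K = ⊤)
    (S : Subgroup D) (hS : S.Normal) (hS2 : IsPGroup 2 S)
    (hU : ∀ s t : D, s * s = 1 → t * t = 1 → s ≠ 1 → t ≠ 1 → s = t)
    (d : D) (hd : d ^ 5 = 1) (hd1 : φ d ≠ 1) : S ≤ Subgroup.center D := by
  have : Fact (Nat.Prime 2) := ⟨Nat.prime_two⟩
  by_contra hcon
  let A : Subgroup D := S ⊓ Subgroup.center D
  have hAS : ∀ a ∈ A, a ∈ S := fun a h => h.1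
  have hAc : ∀ a ∈ A, ∀ g : D, g * a = a * g := fun a h g => (Subgroup.mem_center_iff.1 h.2 g)
  -- involutions in S are in A
  have hinv : ∀ g : D, g ∈ S → g * g = 1 → g ∈ A := by
    intro g hg hgg
    by_cases h1 : g = 1
    · rw [h1]; exact A.one_mem
    refine ⟨hg, Subgroup.mem_center_iff.2 fun x => ?_⟩
    have h2 : x * g * x⁻¹ = g := by
      apply hU _ _ _ hgg _ h1
      · calc x * g * x⁻¹ * (x * g * x⁻¹) = x * (g * g) * x⁻¹ := by group
          _ = 1 := by rw [hgg]; group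
      · intro h; apply h1; simpa using h
    calc x * g = x * g * x⁻¹ * x := by group
      _ = g * x := by rw [h2]
  let π := QuotientGroup.mk' A
  have hπ : ∀ x, π x = 1 ↔ x ∈ A := fun x => QuotientGroup.eq_one_iff x
  -- the second layer
  let P : D → Prop := fun y => y ∈ S ∧ y * y ∈ A ∧ ∀ t ∈ S, y * t * y⁻¹ * t⁻¹ ∈ A
  have hcomA : ∀ x y : D, x * y * x⁻¹ * y⁻¹ ∈ A ↔ Commute (π x) (π y) := by
    intro x y
    rw [← hπ]; simp only [map_mul, map_inv]
    rw [mul_inv_eq_one, mul_inv_eq_iff_eq_mul]; rfl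
  have hPmul : ∀ x y, P x → P y → P (x * y) := by
    rintro x y ⟨hx, hx2, hx3⟩ ⟨hy, hy2, hy3⟩
    refine ⟨S.mul_mem hx hy, ?_, ?_⟩
    · have h1 := (hcomA _ _).1 (hx3 y hy)
      rw [← hπ] at hx2 hy2 ⊢
      simp only [map_mul] at *
      rw [h1.symm.mul_mul_mul_comm, hx2, hy2, one_mul]
    · intro t ht
      rw [hcomA, map_mul]
      exact ((hcomA _ _).1 (hx3 t ht)).mul_left ((hcomA _ _).1 (hy3 t ht))
  have hPconj : ∀ g y, P y → P (g * y * g⁻¹) := by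
    rintro g y ⟨hy, hy2, hy3⟩
    refine ⟨hS.conj_mem _ hy _, ?_, ?_⟩
    · have : g * y * g⁻¹ * (g * y * g⁻¹) = g * (y * y) * g⁻¹ := by group
      rw [this]; exact (inferInstance : A.Normal).conj_mem _ hy2 _
    · intro t ht
      have := hy3 _ (hS.conj_mem _ ht g⁻¹)
      rw [hcomA] at this ⊢
      simp only [map_mul, map_inv] at this ⊢
      exact comm_conj this
  obtain ⟨y, hyP, hyA⟩ : ∃ y, P y ∧ y ∉ A := by
    let SS := S.map π
    have hSS2 : IsPGroup 2 SS := hS2.map π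
    have : Nontrivial SS := by
      rw [Subgroup.nontrivial_iff_ne_bot, Ne, Subgroup.map_eq_bot_iff]
      intro h
      apply hcon
      intro s hs
      have := h hs
      rw [QuotientGroup.ker_mk'] at this
      exact this.2
    have hcn : Nontrivial (Subgroup.center SS) := hSS2.center_nontrivial
    have hc2 : IsPGroup 2 (Subgroup.center SS) := hSS2.to_subgroup _
    have hd2 : 2 ∣ Nat.card (Subgroup.center SS) := by
      obtain ⟨n, hn⟩ := IsPGroup.iff_card.1 hc2
      rw [hn]; apply dvd_pow_self
      rintro rfl
      have := Finite.one_lt_card (α := Subgroup.center SS)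
      omega
    obtain ⟨c, hc⟩ := exists_prime_orderOf_dvd_card' 2 hd2
    obtain ⟨⟨⟨_, s, hs, rfl⟩, hcc⟩, rfl⟩ : ∃ x, x = c := ⟨c, rfl⟩
    rw [Subgroup.mem_center_iff] at hcc
    refine ⟨s, ⟨hs, ?_, ?_⟩, ?_⟩
    · have := pow_orderOf_eq_one (⟨⟨_, s, hs, rfl⟩, Subgroup.mem_center_iff.2 hcc⟩ : Subgroup.center SS)
      rw [hc] at this
      have := congrArg (fun x : Subgroup.center SS => ((x : SS) : D ⧸ A)) this
      simp only [SubmonoidClass.coe_pow, pow_two] at this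
      rw [← hπ, map_mul]; simpa using this
    · intro t ht
      rw [hcomA]
      have := congrArg (fun x : SS => (x : D ⧸ A)) (hcc ⟨_, t, ht, rfl⟩)
      exact this.symm
    · intro h
      rw [← hπ] at h
      have h1 : (⟨⟨_, s, hs, rfl⟩, Subgroup.mem_center_iff.2 hcc⟩ : Subgroup.center SS) = 1 :=
        Subtype.ext (Subtype.ext h)
      rw [h1, orderOf_one] at hc
      omega
  have hnsq : ∀ x, P x → x ∉ A → ∀ c ∈ A, x * x ≠ c * c := by
    intro x hx hxA c hc h
    have h1 : x * c⁻¹ ∈ A := by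
      apply hinv _ (S.mul_mem hx.1 (S.inv_mem (hAS c hc)))
      have h2 := hAc _ (A.inv_mem hc) x
      calc x * c⁻¹ * (x * c⁻¹) = x * (c⁻¹ * x) * c⁻¹ := by group
        _ = x * x * c⁻¹ * c⁻¹ := by rw [← h2]; group
        _ = 1 := by rw [h]; group
    exact hxA (by simpa using A.mul_mem h1 hc)
  have KK : ∀ x1 x2, P x1 → P x2 → x1 ∉ A → x2 ∉ A → Commute x1 x2 → x1 * x2 ∈ A := by
    intro x1 x2 h1 h2 n1 n2 hc
    by_contra hn
    let inst : CommGroup A := { (inferInstance : Group A) with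
      mul_comm := fun a b => Subtype.ext (hAc b b.2 a) }
    obtain ⟨c, hc'⟩ := sq_nonsq (A := A)
      (fun s t hs ht hs1 ht1 => Subtype.ext (hU s t (congrArg Subtype.val hs)
        (congrArg Subtype.val ht) (fun h => hs1 (Subtype.ext h)) (fun h => ht1 (Subtype.ext h))))
      ⟨_, h1.2.1⟩ ⟨_, h2.2.1⟩
      (by rintro ⟨c, hc⟩; exact hnsq x1 h1 n1 c c.2 (congrArg Subtype.val hc))
      (by rintro ⟨c, hc⟩; exact hnsq x2 h2 n2 c c.2 (congrArg Subtype.val hc))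
    have h3 : x1 * x1 * (x2 * x2) = c * c := congrArg Subtype.val hc'
    apply hnsq _ (hPmul _ _ h1 h2) hn c c.2
    rw [← h3, hc.symm.mul_mul_mul_comm]
  have hcc : ∀ x1 x2, P x1 → P x2 →
      (x1 * x2 * x1⁻¹ * x2⁻¹) * (x1 * x2 * x1⁻¹ * x2⁻¹) = 1 := by
    intro x1 x2 h1 h2
    have hz := h1.2.2 x2 h2.1
    set c := x1 * x2 * x1⁻¹ * x2⁻¹ with hc
    have e1 : x1 * x2 * x1⁻¹ = c * x2 := by rw [hc]; group
    have e2 := hAc _ h1.2.1 x2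
    have e3 : x1 * (x1 * x2 * x1⁻¹) * x1⁻¹ = x2 := by
      calc x1 * (x1 * x2 * x1⁻¹) * x1⁻¹ = (x1 * x1) * x2 * (x1 * x1)⁻¹ := by group
        _ = x2 := by rw [← e2]; group
    rw [e1] at e3
    have e4 : x1 * (c * x2) * x1⁻¹ = c * (x1 * x2 * x1⁻¹) := by
      rw [← mul_assoc, hAc c hz x1]; group
    rw [e4, e1, ← mul_assoc] at e3
    simpa using e3
  -- commuting modulo A
  have hsqu : ∀ x, P x → π x * π x = 1 := fun x hx => by rw [← map_mul, hπ]; exact hx.2.1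
  have hcent : ∀ y, P y → Commute (π d) (π y) := by
    intro y hyP
    by_cases hyA : y ∈ A
    · rw [(hπ y).2 hyA]; exact Commute.one_right _
    by_contra hn
    let Y : ℕ → D := fun i => d ^ i * y * (d ^ i)⁻¹
    have hYP : ∀ i, P (Y i) := fun i => hPconj _ _ hyP
    have hδ : π d ^ 5 = 1 := by rw [← map_pow, hd, map_one]
    have hYY : ∀ i j, (j = 1 ∨ j = 2 ∨ j = 3) → π (Y i) ≠ π (Y (i + j)) := by
      intro i j hj h
      have h1 : Commute (π d ^ j) (π y) := by
        simp only [Y, map_mul, map_inv, map_pow, pow_add] at h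
        have h2 : π d ^ i * π d ^ j * π y * (π d ^ i * π d ^ j)⁻¹
          = π d ^ i * (π d ^ j * π y * (π d ^ j)⁻¹) * (π d ^ i)⁻¹ := by group
        rw [h2, mul_left_inj, mul_right_inj, eq_mul_inv_iff_mul_eq] at h
        exact h.symm
      apply hn
      have h6 : π d ^ 6 = π d := by rw [pow_succ, hδ, one_mul]
      rcases hj with rfl | rfl | rfl
      · simpa using h1
      · have := h1.pow_left 3
        rwa [← pow_mul, h6] at this
      · have := h1.pow_left 2
        rwa [← pow_mul, h6] at this
    have hYA : ∀ i, Y i ∉ A := by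
      intro i h
      apply hyA
      have := (inferInstance : A.Normal).conj_mem _ h (d ^ i)⁻¹
      simp only [Y] at this
      convert this using 1
      group
    have hne : ∀ x1 x2, P x1 → P x2 → π x1 ≠ π x2 → x1 * x2 ∉ A := by
      intro x1 x2 h1 h2 hne h
      rw [← hπ, map_mul] at h
      apply hne
      rw [eq_inv_of_mul_eq_one_left h, ← eq_inv_of_mul_eq_one_left (hsqu x2 h2)]
    have hz : ∀ j, (j = 1 ∨ j = 2 ∨ j = 3) → Y 0 * Y j * (Y 0)⁻¹ * (Y j)⁻¹ ≠ 1 := by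
      intro j hj h
      have hc : Commute (Y 0) (Y j) := by
        rw [mul_inv_eq_one, mul_inv_eq_iff_eq_mul] at h; exact h
      refine hne _ _ (hYP 0) (hYP j) ?_ (KK _ _ (hYP 0) (hYP j) (hYA 0) (hYA j) hc)
      simpa using hYY 0 j hj
    have hfin : ∀ j, (j = 2 ∨ j = 3) → π (Y 0) * (π (Y 1) * π (Y j)) = 1 := by
      intro j hj
      have hj' : j = 1 ∨ j = 2 ∨ j = 3 := by tauto
      have h1 := hU _ _ (hcc _ _ (hYP 0) (hYP 1)) (hcc _ _ (hYP 0) (hYP j)) (hz 1 (by simp))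
        (hz j hj')
      have hzz := hcc _ _ (hYP 0) (hYP 1)
      have hzA := (hYP 0).2.2 _ (hYP 1).1
      set z := Y 0 * Y 1 * (Y 0)⁻¹ * (Y 1)⁻¹ with hzdef
      have e1 : Y 0 * Y 1 * (Y 0)⁻¹ = z * Y 1 := by rw [hzdef]; group
      have e2 : Y 0 * Y j * (Y 0)⁻¹ = z * Y j := by rw [h1]; group
      have hc : Commute (Y 0) (Y 1 * Y j) := by
        have : Y 0 * (Y 1 * Y j) * (Y 0)⁻¹ = Y 1 * Y j := by
          calc Y 0 * (Y 1 * Y j) * (Y 0)⁻¹ = (Y 0 * Y 1 * (Y 0)⁻¹) * (Y 0 * Y j * (Y 0)⁻¹) := by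
                group
            _ = z * (Y 1 * z) * Y j := by rw [e1, e2]; group
            _ = (z * z) * (Y 1 * Y j) := by rw [hAc z hzA]; group
            _ = _ := by rw [hzz, one_mul]
        rwa [mul_inv_eq_iff_eq_mul] at this
      have h3 : Y 1 * Y j ∉ A := by
        apply hne _ _ (hYP 1) (hYP j)
        rcases hj with rfl | rfl
        · exact hYY 1 1 (by simp)
        · exact hYY 1 2 (by simp)
      have := KK _ _ (hYP 0) (hPmul _ _ (hYP 1) (hYP j)) (hYA 0) h3 hc
      rw [← hπ] at this
      simpa using this
    have h2 := hfin 2 (by simp)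
    have h3 := hfin 3 (by simp)
    rw [← h2, mul_right_inj, mul_right_inj] at h3
    exact hYY 2 1 (by simp) h3.symm
  let X : Subgroup D := (Subgroup.centralizer {x | ∃ y, P y ∧ x = π y}).comap π
  have hXmem : ∀ g, g ∈ X ↔ ∀ y, P y → Commute (π g) (π y) := by
    intro g
    simp only [X, Subgroup.mem_comap, Subgroup.mem_centralizer_iff]
    constructor
    · intro h y hy; exact (h _ ⟨y, hy, rfl⟩).symm
    · rintro h _ ⟨y, hy, rfl⟩; exact (h y hy).symm
  have hXn : X.Normal := by
    refine ⟨fun n hn g => ?_⟩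
    rw [hXmem] at hn ⊢
    intro y hy
    have := hn _ (hPconj g⁻¹ y hy)
    simp only [map_mul, map_inv] at this ⊢
    exact comm_conj this
  have hXtop := min_normal φ hφ hmin X hXn d ((hXmem d).2 hcent) hd1
  have hcy : ∀ g, g * y * g⁻¹ * y⁻¹ ∈ A := by
    intro g
    rw [hcomA]
    exact (hXmem g).1 (hXtop ▸ Subgroup.mem_top g) y hyP
  let inst : CommGroup A := { (inferInstance : Group A) with
      mul_comm := fun a b => Subtype.ext (hAc b b.2 a) }
  let f : D →* A := MonoidHom.mk' (fun g => (⟨_, hcy g⟩ : A)) (by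
    intro a b
    apply Subtype.ext
    change a * b * y * (a * b)⁻¹ * y⁻¹ = (a * y * a⁻¹ * y⁻¹) * (b * y * b⁻¹ * y⁻¹)
    have h1 := hAc _ (hcy b) a
    calc a * b * y * (a * b)⁻¹ * y⁻¹ = (a * (b * y * b⁻¹ * y⁻¹)) * (y * a⁻¹ * y⁻¹) := by group
      _ = (b * y * b⁻¹ * y⁻¹) * (a * y * a⁻¹ * y⁻¹) := by rw [h1]; group
      _ = _ := (hAc _ (hcy b) _).symm)
  have hf : ∀ g, f g = 1 := by
    intro g
    have h1 := Abelianization.commutator_subset_ker f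
    rw [min_perfect φ hφ hmin] at h1
    exact h1 (Subgroup.mem_top g)
  apply hyA
  refine ⟨hyP.1, Subgroup.mem_center_iff.2 fun g => ?_⟩
  have h := congrArg Subtype.val (hf g)
  change g * y * g⁻¹ * y⁻¹ = 1 at h
  rw [mul_inv_eq_one, mul_inv_eq_iff_eq_mul] at h
  exact h

theorem Core {D N : Type*} [Group D] [Finite D] [CommGroup N] [Finite N] [Nontrivial N]
    (φ : D →* A5)
    (hφ : Function.Surjective φ) (hmin : ∀ K : Subgroup D, K.map φ = ⊤ → K = ⊤)
    (ρ : D →* MulAut N) (h2 : (Nat.card N).Coprime 2) (h3 : (Nat.card N).Coprime 3)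
    (h5 : (Nat.card N).Coprime 5)
    (hf3 : ∀ d : D, orderOf d = 3 → ∀ n, ρ d n = n → n = 1)
    (hf5 : ∀ d : D, orderOf d = 5 → ∀ n, ρ d n = n → n = 1)
    (h15 : ¬ ∃ d : D, orderOf d = 15)
    (hcase : (∃ q, (q = 3 ∨ q = 5) ∧ ¬ ∃ d : D, orderOf d = 2 * q) ∨
      ((∀ s t : D, s * s = 1 → t * t = 1 → s ≠ 1 → t ≠ 1 → s = t) ∧
        ∀ s : D, s * s = 1 → ρ s = 1)) : False := by
  have n5 : ¬ 5 ∣ Nat.card φ.ker := not_dvd_ker φ hφ hmin ρ 5 3 (by norm_num) (by norm_num)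
    (by norm_num) (by norm_num) h5 hf5 hf3 h15
  have n3 : ¬ 3 ∣ Nat.card φ.ker := not_dvd_ker φ hφ hmin ρ 3 5 (by norm_num) (by norm_num)
    (by norm_num) (by norm_num) h3 hf3 hf5 h15
  obtain ⟨S, hSn, hSk, hS2, hSmem⟩ := min_sylow φ hφ hmin 2 Nat.prime_two
  have hTS : ∀ T : Subgroup D, IsPGroup 2 T → ∀ s ∈ T, φ s = 1 → s ∈ S := by
    intro T hT s hs h
    obtain ⟨k, hk⟩ := hT ⟨s, hs⟩
    exact hSmem s h ⟨k, by simpa using congrArg Subtype.val hk⟩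
  refine FinL φ hφ ρ (ker_le φ hφ hmin ρ hf3) n3 h2 hf3 ?_
  intro T hT s hs t ht hst hss
  have hcS : s * t * s⁻¹ * t⁻¹ ∈ S := by
    apply hTS T hT _ (T.mul_mem (T.mul_mem (T.mul_mem hs ht) (T.inv_mem hs)) (T.inv_mem ht))
    simp only [map_mul, map_inv]
    rw [hst.eq]; group
  have hsS : s * s ∈ S := hTS T hT _ (T.mul_mem hs hs) (by rw [map_mul, hss])
  have hgoal : ρ (s * t * s⁻¹ * t⁻¹) = 1 := by
    rcases hcase with ⟨q, hq, hno⟩ | ⟨hU, hρ⟩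
    · refine triv_sylow φ hφ ρ 2 q Nat.prime_two ?_ ?_ ?_ h2 ?_ hno S hSn hS2 _ hcS
      · rcases hq with rfl | rfl <;> norm_num
      · rcases hq with rfl | rfl <;> norm_num
      · rcases hq with rfl | rfl <;> norm_num
      · rcases hq with rfl | rfl
        · exact hf3
        · exact hf5
    · have : Fact (Nat.Prime 5) := ⟨by norm_num⟩
      obtain ⟨d, hd⟩ := exists_prime_orderOf_dvd_card' (G := D) 5
        ((by norm_num : 5 ∣ 60).trans (card_dvd_of φ hφ))
      have hd1 : φ d ≠ 1 := by
        intro h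
        apply n5
        have := orderOf_dvd_natCard (⟨d, h⟩ : φ.ker)
        rwa [← Subgroup.orderOf_coe, hd] at this
      have hSc := Scent φ hφ hmin S hSn hS2 hU d (hd ▸ pow_orderOf_eq_one d) hd1
      apply hρ
      have hz := Subgroup.mem_center_iff.1 (hSc hcS)
      have e2 := Subgroup.mem_center_iff.1 (hSc hsS) t
      set c := s * t * s⁻¹ * t⁻¹ with hc
      have e1 : s * t * s⁻¹ = c * t := by rw [hc]; group
      have e3 : s * (s * t * s⁻¹) * s⁻¹ = t := by
        calc s * (s * t * s⁻¹) * s⁻¹ = (s * s) * t * (s * s)⁻¹ := by group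
          _ = t := by rw [← e2]; group
      rw [e1] at e3
      have e4 : s * (c * t) * s⁻¹ = c * (s * t * s⁻¹) := by
        rw [← mul_assoc, hz s]; group
      rw [e4, e1, ← mul_assoc] at e3
      simpa using e3
  simp only [map_mul, map_inv] at hgoal
  rw [mul_inv_eq_one, mul_inv_eq_iff_eq_mul] at hgoal
  exact hgoal


theorem perm_small {X : Type*} [Finite X] {r : ℕ} (hr : r.Prime) (hX : Nat.card X < r)
    (σ : Equiv.Perm X) (h : σ ^ r = 1) : σ = 1 := by
  rcases (Nat.dvd_prime hr).1 (orderOf_dvd_of_pow_eq_one h) with h1 | h1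
  · exact orderOf_eq_one_iff.1 h1
  · exfalso
    have h2 := orderOf_dvd_natCard σ
    rw [h1, Nat.card_perm, hr.dvd_factorial] at h2
    omega

theorem autA5_ord {r : ℕ} (hr : r.Prime) (h7 : 7 ≤ r) (f : MulAut A5) (h : f ^ r = 1) : f = 1 := by
  have : Fact (Nat.Prime 5) := ⟨by norm_num⟩
  have hcardP : ∀ P : Sylow 5 A5, Nat.card P = 5 := by
    intro P
    have h1 := P.card_eq_multiplicity
    rw [A5_card] at h1
    have : Nat.factorization 60 5 = 1 := by
      rw [show 60 = 5 ^ 1 * 12 by norm_num, Nat.factorization_mul (by norm_num) (by norm_num)]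
      rw [Nat.Prime.factorization_pow (by norm_num)]
      simp
      exact Nat.factorization_eq_zero_of_not_dvd (by norm_num)
    rw [this] at h1; simpa using h1
  let P0 : Sylow 5 A5 := default
  have hn : Nat.card (Sylow 5 A5) ≤ 6 := by
    have h1 := P0.card_dvd_index
    have h2 := card_sylow_modEq_one 5 A5
    have h3 := (P0 : Subgroup A5).card_mul_index
    rw [A5_card] at h3
    have h4 : Nat.card (P0 : Subgroup A5) = 5 := hcardP P0
    rw [h4] at h3
    have h5 : (P0 : Subgroup A5).index = 12 := by omega
    rw [h5] at h1
    have h6 := Nat.le_of_dvd (by norm_num) h1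
    have h7 : Nat.card (Sylow 5 A5) % 5 = 1 := h2
    by_contra hc
    have h8 : Nat.card (Sylow 5 A5) = 11 := by omega
    rw [h8] at h1
    revert h1; norm_num
  have hfix : ∀ P : Sylow 5 A5, f • P = P := by
    intro P
    have h1 := perm_small hr (by omega) (MulAction.toPermHom (MulAut A5) (Sylow 5 A5) f)
      (by rw [← map_pow, h, map_one])
    exact DFunLike.congr_fun h1 P
  have hfixP : ∀ P : Sylow 5 A5, ∀ x ∈ P, f x = x := by
    intro P x hx
    have hmem : ∀ y ∈ P, f y ∈ P := by
      intro y hy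
      have h1 : f • y ∈ f • P := Subgroup.smul_mem_pointwise_smul _ _ _ hy
      rw [hfix P] at h1
      exact h1
    let g : P → P := fun y => ⟨f y, hmem y y.2⟩
    have hg : Function.Injective g := fun a b hab =>
      Subtype.ext (f.injective (congrArg Subtype.val hab))
    let σ : Equiv.Perm P := Equiv.ofBijective g (Finite.injective_iff_bijective.1 hg)
    have hσ : ∀ k : ℕ, ∀ y : P, (((σ ^ k) y : P) : A5) = (f ^ k) y := by
      intro k
      induction k with
      | zero => intro y; rfl
      | succ k ih => intro y; rw [pow_succ', pow_succ', Equiv.Perm.mul_apply, MulAut.mul_apply, ← ih]; rfl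
    have h1 : σ = 1 := by
      apply perm_small hr (by rw [hcardP]; omega)
      ext1 y
      apply Subtype.ext
      rw [hσ, h]; rfl
    have := congrArg Subtype.val (DFunLike.congr_fun h1 ⟨x, hx⟩)
    exact this
  let F : Subgroup A5 := (f : A5 →* A5).eqLocus (MonoidHom.id A5)
  have hle : Subgroup.normalClosure ((P0 : Subgroup A5) : Set A5) ≤ F := by
    rw [Subgroup.normalClosure, Subgroup.closure_le]
    intro x hx
    rw [Group.mem_conjugatesOfSet_iff] at hx
    obtain ⟨y, hy, hc⟩ := hx
    rw [isConj_iff] at hc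
    obtain ⟨c, rfl⟩ := hc
    apply hfixP (MulAut.conj c • P0)
    exact Subgroup.smul_mem_pointwise_smul _ _ _ hy
  have : (Subgroup.normalClosure ((P0 : Subgroup A5) : Set A5)) = ⊤ := by
    rcases (Subgroup.normalClosure_normal (s := ((P0 : Subgroup A5) : Set A5))).eq_bot_or_eq_top with h | h
    · exfalso
      have h1 := Subgroup.subset_normalClosure (s := ((P0 : Subgroup A5) : Set A5))
      rw [h] at h1
      have h3 : (P0 : Subgroup A5) = ⊥ := le_bot_iff.1 h1
      have h2 : Nat.card (P0 : Subgroup A5) = 5 := hcardP P0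
      rw [h3, Subgroup.card_bot] at h2
      omega
    · exact h
  rw [this] at hle
  ext1 x
  exact hle (Subgroup.mem_top x)

theorem lemN (Y : Subgroup (MulAut A5))
    (hY : ∀ a : A5, ∀ y ∈ Y, MulAut.conj a * y * (MulAut.conj a)⁻¹ ∈ Y) :
    Y = ⊥ ∨ (MulAut.conj : A5 →* MulAut A5).range ≤ Y := by
  have key : ∀ a : A5, ∀ y ∈ Y, MulAut.conj (a * (y a)⁻¹) ∈ Y := by
    intro a y hy
    have h1 := Y.mul_mem (hY a y hy) (Y.inv_mem hy)
    convert h1 using 1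
    ext1 x
    simp only [MulAut.mul_apply, MulAut.conj_apply, MulAut.conj_inv_apply, map_mul, map_inv, mul_inv_rev, inv_inv]
    simp [mul_assoc]
  have hn : (Y.comap MulAut.conj).Normal := by
    refine ⟨fun n hn g => ?_⟩
    have := hY g _ hn
    simpa using this
  rcases hn.eq_bot_or_eq_top with h | h
  · left
    rw [eq_bot_iff]
    intro y hy
    rw [Subgroup.mem_bot]
    ext1 a
    have h1 : a * (y a)⁻¹ ∈ Y.comap MulAut.conj := key a y hy
    rw [h, Subgroup.mem_bot, mul_inv_eq_one] at h1
    exact h1.symm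
  · right
    rintro _ ⟨a, rfl⟩
    have : a ∈ Y.comap MulAut.conj := h ▸ Subgroup.mem_top a
    exact this


/-- auxiliary structural property -/
def GoodG (G : Type*) [Group G] : Prop :=
  Group.IsSolvable G ∨ ∃ ψ : G →* MulAut A5, Group.IsSolvable ψ.ker ∧
    (MulAut.conj : A5 →* MulAut A5).range ≤ ψ.range

theorem GoodG.of_equiv {G H : Type*} [Group G] [Group H] (e : G ≃* H) (h : GoodG G) : GoodG H := by
  rcases h with h | ⟨ψ, h1, h2⟩
  · left; exact Group.isSolvable_of_surjective (f := e.toMonoidHom) e.surjective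
  · right
    refine ⟨ψ.comp e.symm.toMonoidHom, ?_, ?_⟩
    · let f : (ψ.comp e.symm.toMonoidHom).ker →* ψ.ker :=
        { toFun := fun x => ⟨e.symm x, x.2⟩, map_one' := by ext; simp, map_mul' := fun x y => Subtype.ext (map_mul e.symm (x : H) y) }
      refine Group.isSolvable_of_isSolvable_injective (f := f) ?_
      intro a b hab
      exact Subtype.ext (e.symm.injective (congrArg Subtype.val hab))
    · refine h2.trans ?_
      rintro _ ⟨g, rfl⟩
      exact ⟨e g, by simp⟩

theorem innA5_not_le (Y : Subgroup (MulAut A5)) (hs : Group.IsSolvable Y) :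
    ¬ (MulAut.conj : A5 →* MulAut A5).range ≤ Y := by
  intro h
  apply A5_not_solvable
  let f : A5 →* Y := (MulAut.conj : A5 →* MulAut A5).codRestrict Y (fun a => h ⟨a, rfl⟩)
  refine Group.isSolvable_of_isSolvable_injective (f := f) ?_
  intro a b hab
  exact A5_conj_inj (congrArg Subtype.val hab)

theorem innA5_normal (f : MulAut A5) (a : A5) : f * MulAut.conj a * f⁻¹ = MulAut.conj (f a) := by
  ext1 x; simp

theorem good_step {H : Type*} [Group H] [Finite H] (K : Subgroup H) [hKn : K.Normal]
    (hq : IsCyclic (H ⧸ K) ∨ Nonempty ((H ⧸ K) ≃* A5)) (h15 : ¬ ∃ g : H, orderOf g = 15)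
    (hK : GoodG K) : GoodG H := by
  rcases hK with hK | ⟨ψ, hs, hr⟩
  · rcases hq with hq | ⟨⟨e⟩⟩
    · left
      have : Group.IsSolvable (H ⧸ K) := Group.isSolvable_of_comm (fun a b => by
        let _ := hq.commGroup; exact mul_comm a b)
      exact Group.isSolvable_of_ker_le_range K.subtype (QuotientGroup.mk' K) (by simp)
    · right
      refine ⟨MulAut.conj.comp (e.toMonoidHom.comp (QuotientGroup.mk' K)), ?_, ?_⟩
      · have : (MulAut.conj.comp (e.toMonoidHom.comp (QuotientGroup.mk' K))).ker = K := by
          ext x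
          rw [MonoidHom.mem_ker, MonoidHom.comp_apply, A5_conj_inj.eq_iff' (map_one _)]
          simp
        rw [this]; exact hK
      · rintro _ ⟨a, rfl⟩
        obtain ⟨x, hx⟩ := e.surjective a
        obtain ⟨x, rfl⟩ := QuotientGroup.mk'_surjective K x
        exact ⟨x, by rw [← hx]; rfl⟩
  right
  let c : H →* MulAut K := MulAut.conjNormal
  have hYgen : ∀ (M : Subgroup K), M.Normal → ∀ h : H,
      (M.map ((c h : MulAut K) : K →* K)).map ψ = ⊥ ∨
      (MulAut.conj : A5 →* MulAut A5).range ≤ (M.map ((c h : MulAut K) : K →* K)).map ψ := by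
    intro M hM h
    apply lemN
    rintro a _ ⟨_, ⟨m, hm, rfl⟩, rfl⟩
    obtain ⟨k, hk⟩ := hr ⟨a, rfl⟩
    obtain ⟨k, rfl⟩ := (c h).surjective k
    rw [← hk]
    refine ⟨_, ⟨k * m * k⁻¹, hM.conj_mem _ hm _, rfl⟩, ?_⟩
    simp
  have hR : ∀ (h : H) (k : K), ψ k = 1 → ψ (c h k) = 1 := by
    intro h k hk
    rcases hYgen ψ.ker inferInstance h with h1 | h1
    · have : ψ (c h k) ∈ (ψ.ker.map ((c h : MulAut K) : K →* K)).map ψ := ⟨_, ⟨k, hk, rfl⟩, rfl⟩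
      rwa [h1, Subgroup.mem_bot] at this
    · exfalso
      refine innA5_not_le _ ?_ h1
      have := Group.isSolvable_of_surjective (f := ((c h : MulAut K) : K →* K).subgroupMap ψ.ker)
        (MonoidHom.subgroupMap_surjective _ _)
      exact Group.isSolvable_of_surjective
        (f := ψ.subgroupMap (ψ.ker.map ((c h : MulAut K) : K →* K)))
        (MonoidHom.subgroupMap_surjective _ _)
  let Inn := (MulAut.conj : A5 →* MulAut A5).range
  have hInnN : Inn.Normal := by
    refine ⟨?_⟩
    rintro _ ⟨a, rfl⟩ g
    exact ⟨_, (innA5_normal g a).symm⟩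
  have hcinv : ∀ (h : H) (k : K), c h⁻¹ (c h k) = k := by
    intro h k; rw [← MulAut.mul_apply, ← map_mul]; simp
  have hR' : ∀ (h : H) (k k' : K), ψ k = ψ k' → ψ (c h k) = ψ (c h k') := by
    intro h k k' hk
    have := hR h (k * k'⁻¹) (by rw [map_mul, map_inv, hk, mul_inv_cancel])
    rw [map_mul, map_mul, map_inv, map_inv, mul_inv_eq_one] at this
    exact this
  have hL : ∀ (h : H) (k : K), ψ k ∈ Inn → ψ (c h k) ∈ Inn := by
    intro h k hk
    rcases hYgen (Inn.comap ψ) (hInnN.comap ψ) h⁻¹ with h1 | h1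
    · exfalso
      refine innA5_not_le ⊥ inferInstance ?_
      rintro _ ⟨a, rfl⟩
      obtain ⟨k, hk⟩ := hr ⟨a, rfl⟩
      have h2 : ψ (c h⁻¹ k) = 1 := by
        rw [← Subgroup.mem_bot, ← h1]
        refine ⟨_, ⟨k, ?_, rfl⟩, rfl⟩
        change ψ k ∈ Inn
        rw [hk]; exact ⟨a, rfl⟩
      have h3 := hR h _ h2
      have h4 := hcinv h⁻¹ k
      rw [inv_inv] at h4
      rw [h4] at h3
      rw [← hk, h3]; exact Subgroup.one_mem _
    · obtain ⟨_, ⟨m, hm, rfl⟩, hmk⟩ := h1 hk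
      have h3 := hR' h _ _ hmk
      have h4 := hcinv h⁻¹ m
      rw [inv_inv] at h4
      rw [← h3]
      change ψ (c h (c h⁻¹ m)) ∈ Inn
      rw [h4]; exact hm
  have hex : ∀ (h : H) (a : A5), ∃ b : A5, ∀ k : K, ψ k = MulAut.conj a → ψ (c h k) = MulAut.conj b := by
    intro h a
    obtain ⟨k, hk⟩ := hr ⟨a, rfl⟩
    obtain ⟨b, hb⟩ := hL h k (by rw [hk]; exact ⟨a, rfl⟩)
    refine ⟨b, fun k' hk' => ?_⟩
    rw [hb]
    exact hR' h _ _ (hk'.trans hk.symm)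
  choose F hF using hex
  have hFmul : ∀ h a b, F h (a * b) = F h a * F h b := by
    intro h a b
    obtain ⟨k, hk⟩ := hr ⟨a, rfl⟩
    obtain ⟨l, hl⟩ := hr ⟨b, rfl⟩
    apply A5_conj_inj
    rw [← hF h (a * b) (k * l) (by rw [map_mul, map_mul, hk, hl]), map_mul, map_mul, map_mul,
      hF h a k hk, hF h b l hl]
  have hFcomp : ∀ h h' a, F (h * h') a = F h (F h' a) := by
    intro h h' a
    obtain ⟨k, hk⟩ := hr ⟨a, rfl⟩
    apply A5_conj_inj
    rw [← hF (h * h') a k hk, map_mul, MulAut.mul_apply, ← hF h (F h' a) _ (hF h' a k hk)]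
  have hF1 : ∀ a, F 1 a = a := by
    intro a
    obtain ⟨k, hk⟩ := hr ⟨a, rfl⟩
    apply A5_conj_inj
    rw [← hF 1 a k hk, map_one]
    exact hk
  let ψ' : H →* MulAut A5 := MonoidHom.mk' (fun h =>
    { toFun := F h
      invFun := F h⁻¹
      left_inv := fun a => by rw [← hFcomp, inv_mul_cancel, hF1]
      right_inv := fun a => by rw [← hFcomp, mul_inv_cancel, hF1]
      map_mul' := hFmul h }) (by
        intro a b
        ext1 x
        exact hFcomp a b x)
  have hψ' : ∀ k : K, ψ' k = ψ k := by
    intro k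
    ext1 a
    obtain ⟨l, hl⟩ := hr ⟨a, rfl⟩
    apply A5_conj_inj
    change MulAut.conj (F k a) = _
    rw [← hF k a l hl, ← innA5_normal, ← hl, ← map_inv, ← map_mul, ← map_mul]
    congr 1
  refine ⟨ψ', ?_, ?_⟩
  · let g : ψ'.ker →* H ⧸ K := (QuotientGroup.mk' K).comp ψ'.ker.subtype
    have hgs : Group.IsSolvable g.range := by
      rcases hq with hq | ⟨⟨e⟩⟩
      · exact Group.isSolvable_of_comm (fun a b => by
          let _ := hq.commGroup; exact Subtype.ext (mul_comm (a : H ⧸ K) b))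
      · have hsimp : IsSimpleGroup (H ⧸ K) := by
          have := A5_simple
          exact (MulEquiv.isSimpleGroup_congr e).2 this
        have hgr : g.range = ψ'.ker.map (QuotientGroup.mk' K) := by
          rw [MonoidHom.range_eq_map, ← Subgroup.map_map, ← MonoidHom.range_eq_map]
          simp
        have hgn : g.range.Normal := by
          rw [hgr]
          exact Subgroup.Normal.map inferInstance _ (QuotientGroup.mk'_surjective K)
        rcases hgn.eq_bot_or_eq_top with h1 | h1
        · rw [h1]; infer_instance
        · exfalso
          have : Fact (Nat.Prime 3) := ⟨by norm_num⟩
          have : Fact (Nat.Prime 5) := ⟨by norm_num⟩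
          obtain ⟨t, ht⟩ := exists_prime_orderOf_dvd_card' (G := H ⧸ K) 3
            (by rw [Nat.card_congr e.toEquiv, A5_card]; norm_num)
          obtain ⟨a, ha⟩ := exists_prime_orderOf_dvd_card' (G := A5) 5 (by rw [A5_card]; norm_num)
          have ht' : t ∈ g.range := h1 ▸ Subgroup.mem_top t
          rw [hgr] at ht'
          obtain ⟨h, hh, rfl⟩ := ht'
          obtain ⟨k, hk⟩ := hr ⟨a, rfl⟩
          refine no_ord_map (ψ'.prod (QuotientGroup.mk' K)) h15 (h * k) ?_
          rw [MonoidHom.prod_apply, map_mul, map_mul, hψ', hk, (hh : ψ' h = 1), one_mul,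
            (by simp : QuotientGroup.mk' K (k : H) = 1), mul_one, Prod.orderOf_mk,
            orderOf_injective _ A5_conj_inj, ha, ht]
          decide
    let f : ψ.ker →* ψ'.ker :=
      { toFun := fun x => ⟨(x : K), by rw [MonoidHom.mem_ker, hψ']; exact x.2⟩
        map_one' := rfl, map_mul' := fun _ _ => rfl }
    refine Group.isSolvable_of_ker_le_range f g.rangeRestrict ?_
    intro x hx
    rw [MonoidHom.ker_rangeRestrict] at hx
    have hxK : (x : H) ∈ K := by
      have : QuotientGroup.mk' K (x : H) = 1 := hx
      simpa using this
    refine ⟨⟨⟨x, hxK⟩, ?_⟩, rfl⟩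
    rw [MonoidHom.mem_ker, ← hψ']
    exact x.2
  · refine hr.trans ?_
    rintro _ ⟨k, rfl⟩
    exact ⟨k, hψ' k⟩

theorem good_of_pseudo {G : Type*} [Group G] [Finite G] (n : ℕ) (H : Fin (n + 1) → Subgroup G)
    (h0 : H 0 = ⊥) (hl : H (Fin.last n) = ⊤)
    (hs : ∀ i : Fin n, H i.castSucc ≤ H i.succ ∧
      ∃ hN : ((H i.castSucc).subgroupOf (H i.succ)).Normal,
        haveI := hN
        IsCyclic (H i.succ ⧸ (H i.castSucc).subgroupOf (H i.succ)) ∨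
        Nonempty ((H i.succ ⧸ (H i.castSucc).subgroupOf (H i.succ)) ≃* alternatingGroup (Fin 5)))
    (h15 : ¬ ∃ g : G, orderOf g = 15) : GoodG G := by
  have key : ∀ i : Fin (n + 1), GoodG (H i) := by
    intro i
    induction i using Fin.induction with
    | zero => left; rw [h0]; infer_instance
    | succ i ih =>
      obtain ⟨hle, hN, hq⟩ := hs i
      exact good_step (hKn := hN) _ hq
        (no_ord_inj (H i.succ).subtype (Subgroup.subtype_injective _) h15)
        (ih.of_equiv (Subgroup.subgroupOfEquivOfLe hle).symm)
  have := key (Fin.last n)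
  rw [hl] at this
  exact this.of_equiv Subgroup.topEquiv


theorem expo_card {G : Type*} [Group G] [Finite G] {l : ℕ} (hl : l.Prime) {N : Subgroup G}
    (h : ∀ a ∈ N, a ^ l = 1) : IsPGroup l N ∧ ∃ n, Nat.card N = l ^ n := by
  have : Fact l.Prime := ⟨hl⟩
  have h1 : IsPGroup l N := fun g => ⟨1, Subtype.ext (by simpa using h g g.2)⟩
  exact ⟨h1, IsPGroup.iff_card.1 h1⟩

theorem pgroup_not_dvd {G : Type*} [Group G] [Finite G] {l b : ℕ} (hl : l.Prime) (hb : b.Prime)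
    (hlb : b ≠ l) {N : Subgroup G} (h : IsPGroup l N) : ¬ b ∣ Nat.card N := by
  have : Fact l.Prime := ⟨hl⟩
  obtain ⟨n, hn⟩ := IsPGroup.iff_card.1 h
  rw [hn]
  intro h
  exact hlb ((Nat.prime_dvd_prime_iff_eq hb hl).1 (hb.dvd_of_dvd_pow h))

theorem dvd_quot {G : Type*} [Group G] [Finite G] {b : ℕ} (hb : b.Prime)
    {N : Subgroup G} (h : b ∣ Nat.card G) (hN : ¬ b ∣ Nat.card N) : b ∣ Nat.card (G ⧸ N) := by
  rw [N.card_eq_card_quotient_mul_card_subgroup] at h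
  exact (hb.dvd_mul.1 h).resolve_right hN

theorem card_quot_lt {G : Type*} [Group G] [Finite G] {N : Subgroup G} (hN : N ≠ ⊥) :
    Nat.card (G ⧸ N) < Nat.card G := by
  rw [N.card_eq_card_quotient_mul_card_subgroup]
  have h1 : 1 < Nat.card N := by
    have : Nontrivial N := (Subgroup.nontrivial_iff_ne_bot N).2 hN
    exact Finite.one_lt_card
  have : 0 < Nat.card (G ⧸ N) := Nat.card_pos
  nlinarith

theorem min_norm {G : Type*} [Group G] [Finite G] (R : Subgroup G) [R.Normal]
    (hs : Group.IsSolvable R) (hR : R ≠ ⊥) :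
    ∃ N : Subgroup G, N.Normal ∧ N ≤ R ∧ N ≠ ⊥ ∧ (∀ a ∈ N, ∀ b ∈ N, a * b = b * a) ∧
      ∃ l : ℕ, l.Prime ∧ ∀ a ∈ N, a ^ l = 1 := by
  obtain ⟨N, hN⟩ : ∃ N, Minimal (fun N : Subgroup G => N.Normal ∧ N ≤ R ∧ N ≠ ⊥) N :=
    exists_minimal_of_wellFoundedLT (fun N : Subgroup G => N.Normal ∧ N ≤ R ∧ N ≠ ⊥)
      ⟨R, inferInstance, le_rfl, hR⟩
  obtain ⟨⟨hNn, hNR, hN1⟩, hmin⟩ := hN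
  have hNs : Group.IsSolvable N :=
    Group.isSolvable_of_isSolvable_injective (f := Subgroup.inclusion hNR)
      (Subgroup.inclusion_injective hNR)
  have hnt : Nontrivial N := (Subgroup.nontrivial_iff_ne_bot N).2 hN1
  have hab : ∀ a ∈ N, ∀ b ∈ N, a * b = b * a := by
    have h1 : ⁅N, N⁆ = ⊥ := by
      by_contra hne
      have hle : ⁅N, N⁆ ≤ N := Subgroup.commutator_le_left N N
      have h2 := hmin ⟨inferInstance, hle.trans hNR, hne⟩ hle
      have h3 : commutator N < ⊤ := Group.IsSolvable.commutator_lt_top_of_nontrivial N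
      apply h3.ne
      apply Subgroup.map_injective N.subtype_injective
      rw [map_commutator_eq, ← MonoidHom.range_eq_map, N.range_subtype]
      exact le_antisymm hle h2
    intro a ha b hb
    have := Subgroup.commutator_mem_commutator ha hb
    rw [h1, Subgroup.mem_bot, commutatorElement_eq_one_iff_mul_comm] at this
    exact this
  refine ⟨N, hNn, hNR, hN1, hab, ?_⟩
  obtain ⟨l, hl, hd⟩ := Nat.exists_prime_and_dvd (Finite.one_lt_card (α := N)).ne'
  have : Fact l.Prime := ⟨hl⟩
  refine ⟨l, hl, ?_⟩
  let Ω : Subgroup G :=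
    { carrier := {x | x ∈ N ∧ x ^ l = 1}
      one_mem' := ⟨N.one_mem, one_pow _⟩
      mul_mem' := by
        rintro a b ⟨ha, ha'⟩ ⟨hb, hb'⟩
        refine ⟨N.mul_mem ha hb, ?_⟩
        rw [(show Commute a b from hab a ha b hb).mul_pow, ha', hb', one_mul]
      inv_mem' := by
        rintro a ⟨ha, ha'⟩
        exact ⟨N.inv_mem ha, by rw [inv_pow, ha', inv_one]⟩ }
  have hΩn : Ω.Normal := by
    refine ⟨?_⟩
    rintro n ⟨h1, h2⟩ g
    exact ⟨hNn.conj_mem _ h1 _, by rw [conj_pow, h2]; simp⟩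
  have hΩ1 : Ω ≠ ⊥ := by
    obtain ⟨x, hx⟩ := exists_prime_orderOf_dvd_card' l hd
    intro h
    have h1 : (x : G) ∈ Ω := ⟨x.2, by
      have := pow_orderOf_eq_one x
      rw [hx] at this
      simpa using congrArg Subtype.val this⟩
    rw [h, Subgroup.mem_bot] at h1
    have h2 : x = 1 := Subtype.ext h1
    rw [h2, orderOf_one] at hx
    exact hl.one_lt.ne hx
  have h1 := hmin ⟨hΩn, fun x hx => hNR hx.1, hΩ1⟩ (fun x hx => hx.1)
  intro a ha
  exact (h1 ha).2

theorem sep_normal {G : Type*} [Group G] [Finite G] (hs : Group.IsSolvable G) {b c : ℕ}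
    (hb : b.Prime) (hc : c.Prime) (hbc : b ≠ c) (hbd : b ∣ Nat.card G) (hcd : c ∣ Nat.card G) :
    ∃ K : Subgroup G, K.Normal ∧ ((b ∣ Nat.card K ∧ ¬ c ∣ Nat.card K) ∨
      (c ∣ Nat.card K ∧ ¬ b ∣ Nat.card K)) := by
  induction hn : Nat.card G using Nat.strong_induction_on generalizing G with
  | _ n ih =>
  have hnt : (⊤ : Subgroup G) ≠ ⊥ := by
    intro h
    have h2 : Nat.card (⊤ : Subgroup G) = 1 := by rw [h]; exact Subgroup.card_bot
    rw [Subgroup.card_top] at h2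
    rw [h2] at hbd
    exact hb.one_lt.ne' (Nat.dvd_one.1 hbd)
  obtain ⟨N, hNn, -, hN1, hNc, l, hl, hNl⟩ := min_norm (⊤ : Subgroup G) inferInstance hnt
  have hp := (expo_card hl hNl).1
  have hdl : l ∣ Nat.card N := by
    obtain ⟨k, hk⟩ := (expo_card hl hNl).2
    rw [hk]; apply dvd_pow_self
    rintro rfl
    have : Nontrivial N := (Subgroup.nontrivial_iff_ne_bot N).2 hN1
    have := Finite.one_lt_card (α := N)
    rw [hk, pow_zero] at this
    omega
  by_cases hlb : b = l
  · exact ⟨N, hNn, Or.inl ⟨hlb ▸ hdl, pgroup_not_dvd hl hc (by rw [← hlb]; exact hbc.symm) hp⟩⟩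
  by_cases hlc : c = l
  · exact ⟨N, hNn, Or.inr ⟨hlc ▸ hdl, pgroup_not_dvd hl hb hlb hp⟩⟩
  have nb := pgroup_not_dvd hl hb hlb hp
  have nc := pgroup_not_dvd hl hc hlc hp
  obtain ⟨K, hK, h⟩ := ih _ (hn ▸ card_quot_lt hN1) (G := G ⧸ N) inferInstance (dvd_quot hb hbd nb)
    (dvd_quot hc hcd nc) rfl
  have hcard : Nat.card (K.comap (QuotientGroup.mk' N)) = Nat.card N * Nat.card K :=
    QuotientGroup.card_preimage_mk N (K : Set (G ⧸ N))
  refine ⟨K.comap (QuotientGroup.mk' N), hK.comap _, ?_⟩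
  rw [hcard, hb.dvd_mul, hc.dvd_mul]
  tauto

/-- the commutative group structure on a commutative subgroup -/
abbrev commOf {G : Type*} [Group G] (N : Subgroup G) (h : ∀ a ∈ N, ∀ b ∈ N, a * b = b * a) :
    CommGroup N :=
  { (inferInstance : Group N) with mul_comm := fun a b => Subtype.ext (h a a.2 b b.2) }

theorem L1aux {G : Type*} [Group G] [Finite G] (N : Subgroup G) [N.Normal]
    (hNc : ∀ a ∈ N, ∀ b ∈ N, a * b = b * a) {a b c : ℕ} (ha : a.Prime) (hb : b.Prime)
    (hc : c.Prime) (hab : a ≠ b) (hac : a ≠ c) (hbc : b ≠ c) (hNa : ∀ n ∈ N, n ^ a = 1)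
    (hN1 : N ≠ ⊥) (hcd : c ∣ Nat.card G) (K : Subgroup G) [hKn : K.Normal] (hK1 : b ∣ Nat.card K)
    (hK2 : ¬ c ∣ Nat.card K) (nab : ¬ ∃ g : G, orderOf g = a * b)
    (nac : ¬ ∃ g : G, orderOf g = a * c) (nbc : ¬ ∃ g : G, orderOf g = b * c) : False := by
  have : Fact b.Prime := ⟨hb⟩
  have : Fact c.Prime := ⟨hc⟩
  have : Fact a.Prime := ⟨ha⟩
  obtain ⟨x, hx⟩ := exists_prime_orderOf_dvd_card' (G := G) c hcd
  let S : Sylow b K := default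
  obtain ⟨w, hw, hwx⟩ := frat K b S x (fun w hw => hKn.conj_mem _ hw _)
  set V := (S : Subgroup K).map K.subtype with hV
  have hVp : IsPGroup b V := S.2.map _
  have hxK : x ∉ K := by
    intro h
    apply hK2
    have := orderOf_dvd_natCard (⟨x, h⟩ : K)
    rwa [← Subgroup.orderOf_coe, hx] at this
  have hcd' : c ∣ orderOf (w * x) := by
    have h1 : QuotientGroup.mk' K (w * x) = QuotientGroup.mk' K x := by
      rw [map_mul]; simp [(QuotientGroup.eq_one_iff w).2 hw]
    have h2 : orderOf (QuotientGroup.mk' K x) = c := by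
      apply orderOf_eq_prime
      · rw [← map_pow, ← hx, pow_orderOf_eq_one, map_one]
      · intro h; exact hxK ((QuotientGroup.eq_one_iff x).1 h)
    rw [← h2, ← h1]
    exact orderOf_map_dvd _ _
  obtain ⟨k, hk⟩ := ex_ord hcd'
  have hyV : (w * x) ^ k ∈ Subgroup.normalizer (V : Set G) :=
    Subgroup.pow_mem _ (mem_norm_of hwx) k
  rw [Subgroup.mem_normalizer_iff] at hyV
  let inst := commOf N hNc
  have hfin := FL (MulAut.conjNormal : G →* MulAut N) V ((w * x) ^ k) c hc
    (by rw [← hk, pow_orderOf_eq_one]) (fun v hv => (hyV v).1 hv) ?_ ?_ ?_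
  · obtain ⟨n, hn⟩ := (Subgroup.ne_bot_iff_exists_ne_one).1 hN1
    have hVb : b ∣ Nat.card V := by
      have : Nat.card V = Nat.card S := Subgroup.card_map_of_injective K.subtype_injective
      rw [this, S.card_eq_multiplicity]
      apply dvd_pow_self
      intro h
      have := (hb.factorization_pos_of_dvd Nat.card_pos.ne' hK1)
      omega
    obtain ⟨v, hv⟩ := exists_prime_orderOf_dvd_card' b hVb
    have h1 := DFunLike.congr_fun (hfin v v.2) n
    have h2 := congrArg Subtype.val h1
    rw [MulAut.conjNormal_apply] at h2
    have h3 : Commute (n : G) (v : G) := by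
      have : (v : G) * n * (v : G)⁻¹ = n := h2
      rw [mul_inv_eq_iff_eq_mul] at this
      exact this.symm
    refine no_comm ((Nat.coprime_primes ha hb).2 hab) nab h3 ?_ ?_
    · exact ((expo_card ha hNa).1).dvd_ord ha n.2 (by simpa using hn)
    · rw [Subgroup.orderOf_coe, hv]
  · intro v hv hvc
    by_contra h1
    refine no_comm ((Nat.coprime_primes hb hc).2 hbc) nbc (x := v) (y := (w * x) ^ k) ?_
      (hVp.dvd_ord hb hv h1) hk.symm.dvd
    rw [mul_inv_eq_iff_eq_mul] at hvc
    exact hvc.symm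
  · intro n hn
    by_contra h1
    have h2 := congrArg Subtype.val hn
    rw [MulAut.conjNormal_apply] at h2
    refine no_comm ((Nat.coprime_primes ha hc).2 hac) nac (x := n) (y := (w * x) ^ k) ?_
      (((expo_card ha hNa).1).dvd_ord ha n.2 (fun h => h1 (Subtype.ext h))) hk.symm.dvd
    rw [mul_inv_eq_iff_eq_mul] at h2
    exact h2.symm
  · obtain ⟨i, hi⟩ := (expo_card ha hNa).2
    obtain ⟨j, hj⟩ := IsPGroup.iff_card.1 hVp
    rw [hi, hj]
    exact Nat.Coprime.pow _ _ ((Nat.coprime_primes ha hb).2 hab)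

theorem lucido {G : Type*} [Group G] [Finite G] (hs : Group.IsSolvable G) (s : Set ℕ)
    (hp : ∀ x ∈ s, x.Prime ∧ x ∣ Nat.card G)
    (hno : ∀ x ∈ s, ∀ y ∈ s, x ≠ y → ¬ ∃ g : G, orderOf g = x * y) {a b c : ℕ} (ha : a ∈ s)
    (hb : b ∈ s) (hc : c ∈ s) (hab : a ≠ b) (hac : a ≠ c) (hbc : b ≠ c) : False := by
  induction hn : Nat.card G using Nat.strong_induction_on generalizing G with
  | _ n ih =>
  have hnt : (⊤ : Subgroup G) ≠ ⊥ := by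
    intro h
    have h2 : Nat.card (⊤ : Subgroup G) = 1 := by rw [h]; exact Subgroup.card_bot
    rw [Subgroup.card_top] at h2
    have := (hp a ha).2
    rw [h2] at this
    exact (hp a ha).1.one_lt.ne' (Nat.dvd_one.1 this)
  obtain ⟨N, hNn, -, hN1, hNc, l, hl, hNl⟩ := min_norm (⊤ : Subgroup G) inferInstance hnt
  by_cases hls : l ∈ s
  · have key : ∀ x ∈ s, ∀ y ∈ s, x ≠ y → l ≠ x → l ≠ y → False := by
      intro x hx y hy hxy hlx hly
      obtain ⟨K, hK, h | h⟩ := sep_normal hs (hp x hx).1 (hp y hy).1 hxy (hp x hx).2 (hp y hy).2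
      · exact L1aux N hNc hl (hp x hx).1 (hp y hy).1 hlx hly hxy hNl hN1 (hp y hy).2 K h.1 h.2
          (hno _ hls _ hx hlx) (hno _ hls _ hy hly) (hno _ hx _ hy hxy)
      · exact L1aux N hNc hl (hp y hy).1 (hp x hx).1 hly hlx hxy.symm hNl hN1 (hp x hx).2 K h.1 h.2
          (hno _ hls _ hy hly) (hno _ hls _ hx hlx) (hno _ hy _ hx hxy.symm)
    by_cases h1 : l = a
    · exact key b hb c hc hbc (h1 ▸ hab) (h1 ▸ hac)
    by_cases h2 : l = b
    · exact key a ha c hc hac (h2 ▸ hab.symm) (h2 ▸ hbc)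
    · exact key a ha b hb hab h1 h2
  · refine ih _ (hn ▸ card_quot_lt hN1) (G := G ⧸ N) inferInstance (fun x hx => ⟨(hp x hx).1, ?_⟩)
      (fun x hx y hy hxy => no_ord_quot N (hno x hx y hy hxy)) rfl
    refine dvd_quot (hp x hx).1 (hp x hx).2 (pgroup_not_dvd hl (hp x hx).1 ?_ (expo_card hl hNl).1)
    rintro rfl
    exact hls hx


theorem fpf_conj {G : Type*} [Group G] [Finite G] {N : Subgroup G} [N.Normal] {a b : ℕ}
    (ha : a.Prime) (hab : a.Coprime b) (hNa : IsPGroup a N) (nab : ¬ ∃ g : G, orderOf g = a * b)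
    (y : G) (hy : b ∣ orderOf y) (n : N) (hn : (MulAut.conjNormal y : MulAut N) n = n) :
    n = 1 := by
  by_contra h1
  have h2 := congrArg Subtype.val hn
  rw [MulAut.conjNormal_apply] at h2
  refine no_comm hab nab (x := n) (y := y) ?_
    (hNa.dvd_ord ha n.2 (fun h => h1 (Subtype.ext h))) hy
  rw [mul_inv_eq_iff_eq_mul] at h2
  exact h2.symm

theorem ord_two {G : Type*} [Group G] {a : G} (h : a * a = 1) (h1 : a ≠ 1) : orderOf a = 2 :=
  orderOf_eq_prime (by rw [pow_two, h]) h1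

theorem inn_perfect : ⁅(MulAut.conj : A5 →* MulAut A5).range, (MulAut.conj : A5 →* MulAut A5).range⁆
    = (MulAut.conj : A5 →* MulAut A5).range := by
  rw [MonoidHom.range_eq_map, ← Subgroup.map_commutator, ← commutator_def, A5_perfect]

/-- Frattini argument for normalizers of Sylow subgroups of normal subgroups. -/
theorem frat_cover {G X : Type*} [Group G] [Finite G] [Group X] (ψ : G →* X) (C : Subgroup G)
    (I : Subgroup X)
    (hI : I ≤ C.map ψ) (l : ℕ) [Fact l.Prime] (W : Subgroup G) (hWk : W ≤ ψ.ker) (hWC : W ≤ C)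
    (hW : ∀ c ∈ C, ∀ w ∈ W, c * w * c⁻¹ ∈ W)
    (S : Sylow l W) :
    I ≤ (C ⊓ Subgroup.normalizer (((S : Subgroup W).map W.subtype : Subgroup G) : Set G)).map ψ := by
  intro i hi
  obtain ⟨x, hx, rfl⟩ := hI hi
  obtain ⟨w, hw, h⟩ := frat W l S x (hW x hx)
  refine ⟨w * x, ⟨C.mul_mem (hWC hw) hx, mem_norm_of h⟩, ?_⟩
  rw [map_mul, (hWk hw : ψ w = 1), one_mul]

theorem Ulem_two {G : Type*} [Group G] [Finite G] (ψ : G →* MulAut A5)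
    (hr : (MulAut.conj : A5 →* MulAut A5).range ≤ ψ.range) {q : ℕ} (hq : q.Prime) (hq2 : q ≠ 2)
    (hqd : q ∣ Nat.card ψ.ker) (h2q : ¬ ∃ g : G, orderOf g = 2 * q)
    (N : Subgroup G) [hNn : N.Normal] (hN1 : N ≠ ⊥) (hNc : ∀ a ∈ N, ∀ b ∈ N, a * b = b * a)
    (hN2 : ∀ a ∈ N, a ^ 2 = 1) : False := by
  have : Fact q.Prime := ⟨hq⟩
  have hcop : Nat.Coprime 2 q := (Nat.coprime_primes Nat.prime_two hq).2 hq2.symm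
  let Q : Sylow q ψ.ker := default
  set QQ := (Q : Subgroup ψ.ker).map ψ.ker.subtype with hQQ
  have hQp : IsPGroup q QQ := Q.2.map _
  have hQnt : Nontrivial QQ := by
    have hc : q ∣ Nat.card QQ := by
      have : Nat.card QQ = Nat.card Q := Subgroup.card_map_of_injective ψ.ker.subtype_injective
      rw [this, Q.card_eq_multiplicity]
      apply dvd_pow_self
      have := (hq.factorization_pos_of_dvd Nat.card_pos.ne' hqd)
      omega
    rw [← Finite.one_lt_card_iff_nontrivial]
    exact lt_of_lt_of_le hq.one_lt (Nat.le_of_dvd Nat.card_pos hc)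
  have hcov := frat_cover ψ ⊤ (MulAut.conj : A5 →* MulAut A5).range (by rw [← MonoidHom.range_eq_map]; exact hr) q ψ.ker le_rfl le_top
    (fun c _ w hw => (inferInstance : ψ.ker.Normal).conj_mem _ hw _) Q
  rw [top_inf_eq, ← hQQ] at hcov
  set M := Subgroup.normalizer (QQ : Set G) with hM
  -- the central elements
  let E : G → Prop := fun e => e ∈ QQ ∧ (∀ t ∈ QQ, t * e = e * t) ∧ e ^ q = 1
  obtain ⟨e0, he0, he01⟩ : ∃ e, E e ∧ e ≠ 1 := by
    have hcn : Nontrivial (Subgroup.center QQ) := hQp.center_nontrivial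
    have hc2 : IsPGroup q (Subgroup.center QQ) := hQp.to_subgroup _
    obtain ⟨k, hk⟩ := IsPGroup.iff_card.1 hc2
    have hd2 : q ∣ Nat.card (Subgroup.center QQ) := by
      rw [hk]; apply dvd_pow_self
      rintro rfl
      have := Finite.one_lt_card (α := Subgroup.center QQ)
      rw [hk, pow_zero] at this
      omega
    obtain ⟨c, hc⟩ := exists_prime_orderOf_dvd_card' q hd2
    refine ⟨((c : QQ) : G), ⟨(c : QQ).2, ?_, ?_⟩, ?_⟩
    · intro t ht
      exact congrArg Subtype.val (Subgroup.mem_center_iff.1 c.2 ⟨t, ht⟩)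
    · rw [← hc, ← Subgroup.orderOf_coe, ← Subgroup.orderOf_coe, pow_orderOf_eq_one]
    · intro h
      have : c = 1 := Subtype.ext (Subtype.ext h)
      rw [this, orderOf_one] at hc
      exact hq.one_lt.ne hc
  let inst := commOf N hNc
  have hNp := (expo_card Nat.prime_two hN2).1
  have hcyc : ∀ e, E e → e ∈ Subgroup.zpowers e0 := by
    intro e he
    by_contra hne
    have hfp : ∀ y : G, y ^ q = 1 → y ≠ 1 → ∀ n : N, (MulAut.conjNormal y : MulAut N) n = n → n = 1 := by
      intro y hy hy1 n hn
      exact fpf_conj Nat.prime_two hcop hNp h2q y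
        (ord_prime_of_pow (k := 1) hq (by simpa using hy) hy1) n hn
    have hcomm : Commute e e0 := he0.2.1 e he.1
    apply hN1
    rw [eq_bot_iff]
    intro n hn
    have h1 := rankLem (N := N) (MulAut.conjNormal e) (MulAut.conjNormal e0)
      (by
        change _ = _
        rw [← map_mul, ← map_mul, hcomm.eq]) q hq
      (by rw [← map_pow, he.2.2, map_one])
      (by rw [← map_pow, he0.2.2, map_one]) (hfp e0 he0.2.2 he01)
      (by
        intro j n hn
        rw [← map_pow, ← map_mul] at hn
        refine hfp _ ?_ ?_ n hn
        · rw [(hcomm.pow_right j).mul_pow, he.2.2, one_mul, ← pow_mul, mul_comm, pow_mul, he0.2.2,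
            one_pow]
        · intro h
          apply hne
          rw [eq_inv_of_mul_eq_one_left h]
          exact Subgroup.inv_mem _ (Subgroup.npow_mem_zpowers _ _)) ⟨n, hn⟩
    have h2 : n ^ q = 1 := congrArg Subtype.val h1
    rw [Subgroup.mem_bot, ← orderOf_eq_one_iff, ← Nat.dvd_one, ← (hcop : Nat.gcd 2 q = 1)]
    exact Nat.dvd_gcd (orderOf_dvd_of_pow_eq_one (hN2 n hn)) (orderOf_dvd_of_pow_eq_one h2)
  have hME : ∀ m ∈ M, ∃ k : ℤ, m * e0 * m⁻¹ = e0 ^ k := by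
    intro m hm
    rw [hM, Subgroup.mem_normalizer_iff] at hm
    have h1 : E (m * e0 * m⁻¹) := by
      refine ⟨(hm _).1 he0.1, ?_, ?_⟩
      · intro t ht
        have h2 : m⁻¹ * t * m ∈ QQ := by
          rw [hm]
          have : m * (m⁻¹ * t * m) * m⁻¹ = t := by group
          rw [this]; exact ht
        have h3 := he0.2.1 _ h2
        calc t * (m * e0 * m⁻¹) = m * ((m⁻¹ * t * m) * e0) * m⁻¹ := by group
          _ = _ := by rw [h3]; group
      · rw [conj_pow, he0.2.2]; simp
    obtain ⟨k, hk⟩ := hcyc _ h1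
    exact ⟨k, hk.symm⟩
  have hcen : ⁅M, M⁆ ≤ Subgroup.centralizer {e0} := by
    rw [Subgroup.commutator_le]
    intro m hm m' hm'
    obtain ⟨k, hk⟩ := hME m⁻¹ (M.inv_mem hm)
    obtain ⟨k', hk'⟩ := hME m'⁻¹ (M.inv_mem hm')
    have h1 : m⁻¹ * m'⁻¹ * e0 * (m⁻¹ * m'⁻¹)⁻¹ = e0 ^ (k * k') := by
      calc m⁻¹ * m'⁻¹ * e0 * (m⁻¹ * m'⁻¹)⁻¹ = m⁻¹ * (m'⁻¹ * e0 * m'⁻¹⁻¹) * m⁻¹⁻¹ := by group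
        _ = _ := by rw [hk', ← conj_zpow, hk, zpow_mul]
    have h2 : m'⁻¹ * m⁻¹ * e0 * (m'⁻¹ * m⁻¹)⁻¹ = e0 ^ (k * k') := by
      calc m'⁻¹ * m⁻¹ * e0 * (m'⁻¹ * m⁻¹)⁻¹ = m'⁻¹ * (m⁻¹ * e0 * m⁻¹⁻¹) * m'⁻¹⁻¹ := by group
        _ = _ := by rw [hk, ← conj_zpow, hk', mul_comm k, zpow_mul]
    rw [Subgroup.mem_centralizer_singleton_iff, commutatorElement_def]
    have h3 := h1.trans h2.symm
    calc m * m' * m⁻¹ * m'⁻¹ * e0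
        = m * m' * (m⁻¹ * m'⁻¹ * e0 * (m⁻¹ * m'⁻¹)⁻¹) * (m⁻¹ * m'⁻¹) := by group
      _ = _ := by rw [h3]; group
  have h2 : (MulAut.conj : A5 →* MulAut A5).range ≤ ⁅M, M⁆.map ψ := by
    rw [Subgroup.map_commutator, ← inn_perfect]
    exact Subgroup.commutator_mono hcov hcov
  have : Fact (Nat.Prime 2) := ⟨Nat.prime_two⟩
  obtain ⟨t, ht⟩ := exists_prime_orderOf_dvd_card' (G := A5) 2 (by rw [A5_card]; norm_num)
  obtain ⟨g, hg, hgt⟩ := h2 ⟨t, rfl⟩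
  have hc := Subgroup.mem_centralizer_singleton_iff.1 (hcen hg)
  refine no_comm hcop h2q (x := g) (y := e0) hc ?_
    (ord_prime_of_pow (k := 1) hq (by simpa using he0.2.2) he01)
  rw [← ht, ← orderOf_injective _ A5_conj_inj t, ← hgt]
  exact orderOf_map_dvd _ _

theorem Ulem {G : Type*} [Group G] [Finite G] (ψ : G →* MulAut A5) (hs : Group.IsSolvable ψ.ker)
    (hr : (MulAut.conj : A5 →* MulAut A5).range ≤ ψ.range) {q : ℕ} (hq : q.Prime) (hq2 : q ≠ 2)
    (hqd : q ∣ Nat.card ψ.ker) (h2q : ¬ ∃ g : G, orderOf g = 2 * q) :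
    ∀ a b : G, a * a = 1 → b * b = 1 → a ≠ 1 → b ≠ 1 → Commute a b → a = b := by
  induction hn : Nat.card G using Nat.strong_induction_on generalizing G with
  | _ n ih =>
  intro a b haa hbb ha1 hb1 hab
  have : Fact q.Prime := ⟨hq⟩
  have hcop : Nat.Coprime 2 q := (Nat.coprime_primes Nat.prime_two hq).2 hq2.symm
  have hab2 : (a * b) * (a * b) = 1 := by rw [hab.symm.mul_mul_mul_comm, haa, hbb, one_mul]
  suffices h : a * b = 1 by
    rw [eq_inv_of_mul_eq_one_left h, ← eq_inv_of_mul_eq_one_left hbb]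
  have hnt : ψ.ker ≠ ⊥ := by
    intro h
    rw [h, Subgroup.card_bot] at hqd
    exact hq.one_lt.ne' (Nat.dvd_one.1 hqd)
  obtain ⟨N, hNn, hNk, hN1, hNc, l, hl, hNl⟩ := min_norm ψ.ker hs hnt
  have hNp := (expo_card hl hNl).1
  by_cases hl2 : l = 2
  · subst hl2
    exact (Ulem_two ψ hr hq hq2 hqd h2q N hN1 hNc hNl).elim
  by_cases hlq : l = q
  · subst hlq
    have hinv : ∀ x : G, x * x = 1 → x ≠ 1 → ∀ n ∈ N, x * n * x⁻¹ = n⁻¹ := by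
      intro x hx hx1 n hn
      have hxn := hNn.conj_mem n hn x
      have hm : x * (x * n * x⁻¹ * n) * x⁻¹ = x * n * x⁻¹ * n := by
        calc x * (x * n * x⁻¹ * n) * x⁻¹ = ((x * x) * n * (x * x)⁻¹) * (x * n * x⁻¹) := by group
          _ = n * (x * n * x⁻¹) := by rw [hx]; group
          _ = _ := hNc _ hn _ hxn
      have := fpf_conj (N := N) hl hcop.symm hNp (by rwa [mul_comm]) x
        (by rw [ord_two hx hx1]) ⟨x * n * x⁻¹ * n, N.mul_mem hxn hn⟩ (Subtype.ext (by simpa using hm))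
      exact eq_inv_of_mul_eq_one_left (congrArg Subtype.val this)
    by_contra hne
    obtain ⟨n, hn1⟩ := (Subgroup.ne_bot_iff_exists_ne_one).1 hN1
    apply hn1
    refine fpf_conj (N := N) hl hcop.symm hNp (by rwa [mul_comm]) (a * b)
        (by rw [ord_two hab2 hne]) n (Subtype.ext ?_)
    rw [MulAut.conjNormal_apply]
    calc a * b * n * (a * b)⁻¹ = a * (b * n * b⁻¹) * a⁻¹ := by group
      _ = (a * n * a⁻¹)⁻¹ := by rw [hinv b hbb hb1 n n.2]; group
      _ = n := by rw [hinv a haa ha1 n n.2, inv_inv]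
  · have hcop2 : Nat.Coprime 2 l := (Nat.coprime_primes Nat.prime_two hl).2 (Ne.symm hl2)
    have hN2 : ∀ x ∈ N, x * x = 1 → x = 1 := by
      intro x hx hxx
      rw [← orderOf_eq_one_iff, ← Nat.dvd_one, ← (hcop2 : Nat.gcd 2 l = 1)]
      exact Nat.dvd_gcd (orderOf_dvd_of_pow_eq_one (by rw [pow_two, hxx]))
        (orderOf_dvd_of_pow_eq_one (hNl x hx))
    let ψ' : G ⧸ N →* MulAut A5 := QuotientGroup.lift N ψ hNk
    have hmk : ∀ x, ψ' (QuotientGroup.mk' N x) = ψ x := fun x => rfl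
    let f : ψ.ker →* ψ'.ker := ((QuotientGroup.mk' N).comp ψ.ker.subtype).codRestrict ψ'.ker
      (fun x => by rw [MonoidHom.mem_ker]; exact x.2)
    have hf : Function.Surjective f := by
      rintro ⟨x, hx⟩
      obtain ⟨x, rfl⟩ := QuotientGroup.mk'_surjective N x
      exact ⟨⟨x, hx⟩, rfl⟩
    have hs' : Group.IsSolvable ψ'.ker := Group.isSolvable_of_surjective hf
    have hr' : (MulAut.conj : A5 →* MulAut A5).range ≤ ψ'.range := by
      refine hr.trans ?_
      rintro _ ⟨x, rfl⟩
      exact ⟨QuotientGroup.mk' N x, rfl⟩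
    have hqd' : q ∣ Nat.card ψ'.ker := by
      obtain ⟨x, hx⟩ := exists_prime_orderOf_dvd_card' q hqd
      have h1 : orderOf (f x) = q := by
        apply orderOf_eq_prime
        · rw [← map_pow, ← hx, pow_orderOf_eq_one, map_one]
        · intro h
          have h2 : (x : G) ∈ N := (QuotientGroup.eq_one_iff (x : G)).1 (congrArg Subtype.val h)
          apply pgroup_not_dvd hl hq (Ne.symm hlq) hNp
          have := orderOf_dvd_natCard (⟨x, h2⟩ : N)
          rwa [Subgroup.orderOf_mk, Subgroup.orderOf_coe, hx] at this
      rw [← h1]; exact orderOf_dvd_natCard _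
    have h1 := ih _ (hn ▸ card_quot_lt hN1) ψ' hs' hr' hqd' (no_ord_quot N h2q) rfl
      (QuotientGroup.mk' N a) (QuotientGroup.mk' N b) (by rw [← map_mul, haa, map_one])
      (by rw [← map_mul, hbb, map_one])
      (fun h => ha1 (hN2 a ((QuotientGroup.eq_one_iff a).1 h) haa))
      (fun h => hb1 (hN2 b ((QuotientGroup.eq_one_iff b).1 h) hbb)) (hab.map _)
    apply hN2 _ _ hab2
    apply (QuotientGroup.eq_one_iff (a * b)).1
    change QuotientGroup.mk' N (a * b) = 1
    rw [map_mul, h1, ← map_mul, hbb, map_one]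


theorem FinL2 {G : Type*} [Group G] [Finite G] (ψ : G →* MulAut A5) (M P : Subgroup G)
    (hM : (MulAut.conj : A5 →* MulAut A5).range ≤ M.map ψ) {r : ℕ} (hr : r.Prime) (h7 : 7 ≤ r)
    (hP : IsPGroup r P) [Nontrivial P] (hMP : M ≤ Subgroup.normalizer (P : Set G))
    (h3r : ¬ ∃ g : G, orderOf g = 3 * r) (h5r : ¬ ∃ g : G, orderOf g = 5 * r)
    (h15 : ¬ ∃ g : G, orderOf g = 15)
    (hcase : (∃ q, (q = 3 ∨ q = 5) ∧ ¬ ∃ d : G, orderOf d = 2 * q) ∨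
      (∃ z : G, (∀ s ∈ M, s * s = 1 → s ≠ 1 → s = z) ∧ ∀ n ∈ P, z * n = n * z)) : False := by
  have : Fact r.Prime := ⟨hr⟩
  set I := (MulAut.conj : A5 →* MulAut A5).range with hI
  let Q : Subgroup G → Prop := fun D => D ≤ M ∧ I ≤ D.map ψ
  obtain ⟨D, hD⟩ := exists_minimal_of_wellFoundedLT Q ⟨M, le_rfl, hM⟩
  obtain ⟨⟨hDM, hDI⟩, hDmin⟩ := hD
  have hDle : D ≤ I.comap ψ := by
    have h1 : Q (D ⊓ I.comap ψ) := by
      refine ⟨inf_le_left.trans hDM, ?_⟩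
      intro i hi
      obtain ⟨d, hd, rfl⟩ := hDI hi
      exact ⟨d, ⟨hd, hi⟩, rfl⟩
    exact (hDmin h1 inf_le_left).trans inf_le_right
  let e := MonoidHom.ofInjective A5_conj_inj
  let φ : D →* A5 := e.symm.toMonoidHom.comp ((ψ.comp D.subtype).codRestrict I (fun d => hDle d.2))
  have hφc : ∀ d : D, MulAut.conj (φ d) = ψ d := by
    intro d
    have : e (φ d) = ⟨ψ d, hDle d.2⟩ := e.apply_symm_apply _
    exact congrArg Subtype.val this
  have hφ : Function.Surjective φ := by
    intro a
    obtain ⟨d, hd, h⟩ := hDI ⟨a, rfl⟩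
    refine ⟨⟨d, hd⟩, A5_conj_inj ?_⟩
    rw [hφc]; exact h
  have hmin : ∀ K : Subgroup D, K.map φ = ⊤ → K = ⊤ := by
    intro K hK
    have h1 : Q (K.map D.subtype) := by
      refine ⟨(Subgroup.map_subtype_le K).trans hDM, ?_⟩
      rintro _ ⟨a, rfl⟩
      obtain ⟨k, hk, rfl⟩ : a ∈ K.map φ := by rw [hK]; trivial
      exact ⟨k, ⟨k, hk, rfl⟩, (hφc k).symm⟩
    have h2 := hDmin h1 (Subgroup.map_subtype_le K)
    rw [eq_top_iff]
    intro d _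
    obtain ⟨k, hk, hkd⟩ := h2 d.2
    rwa [← Subtype.ext (show (k : G) = d from hkd)]
  let Z : Subgroup G := P ⊓ Subgroup.centralizer (P : Set G)
  have hZc : ∀ a ∈ Z, ∀ b ∈ Z, a * b = b * a := fun a ha b hb => ((ha.2 b hb.1)).symm
  have hZp : IsPGroup r Z := hP.to_le inf_le_left
  have hZnt : Nontrivial Z := by
    have hcn : Nontrivial (Subgroup.center P) := hP.center_nontrivial
    obtain ⟨c, hc⟩ := exists_ne (1 : Subgroup.center P)
    refine ⟨⟨⟨((c : P) : G), (c : P).2, ?_⟩, 1, ?_⟩⟩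
    · intro t ht
      exact congrArg Subtype.val (Subgroup.mem_center_iff.1 c.2 ⟨t, ht⟩)
    · intro h
      have h' : ((c : P) : G) = 1 := congrArg Subtype.val h
      exact hc (Subtype.ext (Subtype.ext h'))
  have hDZ : D ≤ Subgroup.normalizer (Z : Set G) := by
    intro d hd
    have hm := Subgroup.mem_normalizer_iff.1 (hMP (hDM hd))
    apply mem_norm_of
    rintro t ⟨ht1, ht2⟩
    refine ⟨(hm t).1 ht1, ?_⟩
    intro s hs
    have h2 : d⁻¹ * s * d ∈ P := by
      rw [hm]
      have : d * (d⁻¹ * s * d) * d⁻¹ = s := by group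
      rw [this]; exact hs
    have h3 := ht2 _ h2
    calc s * (d * t * d⁻¹) = d * ((d⁻¹ * s * d) * t) * d⁻¹ := by group
      _ = _ := by rw [h3]; group
  let inst := commOf Z hZc
  let ρ : D →* MulAut Z := (Subgroup.normalizerMonoidHom Z).comp (Subgroup.inclusion hDZ)
  have hρ : ∀ (d : D) (n : Z), ((ρ d n : Z) : G) = d * n * (d : G)⁻¹ := fun d n => rfl
  have hcop : ∀ b : ℕ, b.Prime → b < 7 → (Nat.card Z).Coprime b := by
    intro b hb hb7
    rw [Nat.coprime_comm, hb.coprime_iff_not_dvd]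
    exact pgroup_not_dvd hr hb (by omega) hZp
  have hf : ∀ b : ℕ, b.Prime → b < 7 → (¬ ∃ g : G, orderOf g = b * r) →
      ∀ d : D, orderOf d = b → ∀ n, ρ d n = n → n = 1 := by
    intro b hb hb7 hno d hd n hn
    by_contra h1
    have h2 := congrArg Subtype.val hn
    rw [hρ] at h2
    refine no_comm ((Nat.coprime_primes hb hr).2 (by omega)) hno (x := (d : G)) (y := (n : G)) ?_
      (by rw [Subgroup.orderOf_coe, hd]) (hZp.dvd_ord hr n.2 (fun h => h1 (Subtype.ext h)))
    rw [mul_inv_eq_iff_eq_mul] at h2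
    exact h2
  refine Core φ hφ hmin ρ (hcop 2 (by norm_num) (by norm_num)) (hcop 3 (by norm_num) (by norm_num))
    (hcop 5 (by norm_num) (by norm_num)) (hf 3 (by norm_num) (by norm_num) h3r)
    (hf 5 (by norm_num) (by norm_num) h5r) (no_ord_inj D.subtype D.subtype_injective h15) ?_
  rcases hcase with ⟨q, hq, hno⟩ | ⟨z, hz, hzP⟩
  · exact Or.inl ⟨q, hq, no_ord_inj D.subtype D.subtype_injective hno⟩
  · right
    have hsz : ∀ s : D, s * s = 1 → s ≠ 1 → (s : G) = z := fun s hs hs1 =>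
      hz s (hDM s.2) (congrArg Subtype.val hs) (fun h => hs1 (Subtype.ext h))
    refine ⟨fun s t hs ht hs1 ht1 => Subtype.ext ((hsz s hs hs1).trans (hsz t ht ht1).symm), ?_⟩
    intro s hs
    by_cases hs1 : s = 1
    · rw [hs1, map_one]
    · ext n
      rw [hρ, hsz s hs hs1, hzP n n.2.1]
      simp

theorem invol_conj {H : Type*} [Group H] [Finite H]
    (hU : ∀ a b : H, a * a = 1 → b * b = 1 → a ≠ 1 → b ≠ 1 → Commute a b → a = b)
    (z w : H) (hz : z * z = 1) (hw : w * w = 1) (hz1 : z ≠ 1) (hw1 : w ≠ 1) :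
    ∃ x : H, x * z * x⁻¹ = w := by
  have : Fact (Nat.Prime 2) := ⟨Nat.prime_two⟩
  have hS : ∀ z : H, z * z = 1 → ∃ S : Sylow 2 H, z ∈ S := by
    intro z hz
    have h1 : IsPGroup 2 (Subgroup.zpowers z) := by
      rw [IsPGroup.iff_orderOf]
      rintro ⟨g, k, rfl⟩
      have h2 : orderOf (⟨z ^ k, k, rfl⟩ : Subgroup.zpowers z) ∣ 2 ^ 1 := by
        apply orderOf_dvd_of_pow_eq_one
        apply Subtype.ext
        change (z ^ k) ^ (2 ^ 1) = 1
        rw [pow_one, ← zpow_natCast, ← zpow_mul, mul_comm, zpow_mul, zpow_natCast, pow_two, hz, one_zpow]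
      obtain ⟨j, -, hj⟩ := (Nat.dvd_prime_pow Nat.prime_two).1 h2
      exact ⟨j, hj⟩
    obtain ⟨S, hS⟩ := h1.exists_le_sylow
    exact ⟨S, hS (Subgroup.mem_zpowers z)⟩
  obtain ⟨S, hzS⟩ := hS z hz
  obtain ⟨T, hwT⟩ := hS w hw
  obtain ⟨x, hx⟩ := MulAction.exists_smul_eq H S T
  have hzT : x * z * x⁻¹ ∈ T := by
    rw [← hx]
    exact Subgroup.smul_mem_pointwise_smul z (MulAut.conj x) _ hzS
  refine ⟨x, ?_⟩
  have hTnt : Nontrivial T := ⟨⟨⟨w, hwT⟩, 1, fun h => hw1 (congrArg Subtype.val h)⟩⟩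
  have hcn : Nontrivial (Subgroup.center T) := T.2.center_nontrivial
  have hc2 : IsPGroup 2 (Subgroup.center T) := T.2.to_subgroup _
  obtain ⟨k, hk⟩ := IsPGroup.iff_card.1 hc2
  have hd2 : 2 ∣ Nat.card (Subgroup.center T) := by
    rw [hk]; apply dvd_pow_self
    rintro rfl
    have := Finite.one_lt_card (α := Subgroup.center T)
    rw [hk, pow_zero] at this
    omega
  obtain ⟨c, hc⟩ := exists_prime_orderOf_dvd_card' 2 hd2
  have hcc : ((c : T) : H) * ((c : T) : H) = 1 := by
    have h : c ^ 2 = 1 := orderOf_dvd_iff_pow_eq_one.1 (by rw [hc])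
    rw [← pow_two]
    exact congrArg (fun d : Subgroup.center T => ((d : T) : H)) h
  have hc1 : ((c : T) : H) ≠ 1 := by
    intro h
    have : c = 1 := Subtype.ext (Subtype.ext h)
    rw [this, orderOf_one] at hc
    omega
  have hct : ∀ t ∈ T, Commute t ((c : T) : H) := fun t ht =>
    congrArg Subtype.val (Subgroup.mem_center_iff.1 c.2 ⟨t, ht⟩)
  have hxx : (x * z * x⁻¹) * (x * z * x⁻¹) = 1 := by
    calc (x * z * x⁻¹) * (x * z * x⁻¹) = x * (z * z) * x⁻¹ := by group
      _ = 1 := by rw [hz]; group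
  have hx1 : x * z * x⁻¹ ≠ 1 := by
    intro h
    exact hz1 (by simpa using h)
  rw [hU _ _ hxx hcc hx1 hc1 (hct _ hzT), hU _ _ hw hcc hw1 hc1 (hct _ hwT)]

theorem even_ker {G : Type*} [Group G] [Finite G] (ψ : G →* MulAut A5)
    (hr : (MulAut.conj : A5 →* MulAut A5).range ≤ ψ.range)
    (hU : ∀ a b : G, a * a = 1 → b * b = 1 → a ≠ 1 → b ≠ 1 → Commute a b → a = b) :
    2 ∣ Nat.card ψ.ker := by
  by_contra hodd
  have : Fact (Nat.Prime 2) := ⟨Nat.prime_two⟩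
  obtain ⟨V, a, b, hb, hb1, hV2, haV, hV3, hVb, hVc⟩ := A5_V4
  have hV4 : 2 ^ 2 ∣ Nat.card V := by
    have hVp : IsPGroup 2 V := by
      intro v
      exact ⟨1, Subtype.ext (by simpa [pow_two] using hV2 v v.2)⟩
    obtain ⟨k, hk⟩ := IsPGroup.iff_card.1 hVp
    rw [hk]
    apply pow_dvd_pow
    have h3 : 2 < Nat.card V := by
      classical
      have := Fintype.ofFinite V
      rw [Nat.card_eq_fintype_card, Fintype.two_lt_card_iff]
      refine ⟨1, ⟨b, hb⟩, ⟨a * b * a⁻¹, haV b hb⟩, ?_, ?_, ?_⟩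
      · intro h; exact hb1 (congrArg Subtype.val h).symm
      · intro h
        have h2 : 1 = a * b * a⁻¹ := congrArg Subtype.val h
        exact hb1 (by simpa using h2.symm)
      · intro h
        have h2 : b = a * b * a⁻¹ := congrArg Subtype.val h
        exact hVb 1 V.one_mem (by simpa using h2.symm)
    rw [hk] at h3
    by_contra hk2
    have : k ≤ 1 := by omega
    have := Nat.pow_le_pow_right (show 0 < 2 by norm_num) this
    omega
  let W : Subgroup G := (V.map (MulAut.conj : A5 →* MulAut A5)).comap ψ
  have hVW : V.map (MulAut.conj : A5 →* MulAut A5) ≤ W.map ψ := by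
    rintro _ ⟨v, hv, rfl⟩
    obtain ⟨g, hg⟩ := hr ⟨v, rfl⟩
    exact ⟨g, ⟨v, hv, hg.symm⟩, hg⟩
  have hW4 : 2 ^ 2 ∣ Nat.card W := by
    refine hV4.trans ?_
    have h1 : Nat.card (V.map (MulAut.conj : A5 →* MulAut A5)) = Nat.card V :=
      Subgroup.card_map_of_injective A5_conj_inj
    rw [← h1]
    exact (Subgroup.card_dvd_of_le hVW).trans (Subgroup.card_map_dvd W ψ)
  obtain ⟨T, hT⟩ := Sylow.exists_subgroup_card_pow_prime 2 hW4
  have hT2 : ∀ t ∈ T, t * t = 1 := by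
    intro t ht
    have hk : ((t * t : W) : G) ∈ ψ.ker := by
      obtain ⟨v, hv, hvt⟩ := t.2
      change ψ (t * t) = 1
      rw [map_mul, ← hvt, ← map_mul, hV2 v hv, map_one]
    have h4 : (t * t) ^ 4 = 1 := by
      have h := orderOf_dvd_natCard (⟨t, ht⟩ : T)
      rw [Subgroup.orderOf_mk, hT] at h
      have h1 : t ^ 4 = 1 := orderOf_dvd_iff_pow_eq_one.1 h
      rw [← pow_two, ← pow_mul, mul_comm, pow_mul, h1, one_pow]
    by_contra hne
    apply hodd
    have h5 := ord_prime_of_pow (k := 2) Nat.prime_two (by simpa using h4) hne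
    rw [← Subgroup.orderOf_coe] at h5
    have h6 := orderOf_dvd_natCard (⟨_, hk⟩ : ψ.ker)
    rw [Subgroup.orderOf_mk] at h6
    exact h5.trans h6
  classical
  have := Fintype.ofFinite T
  have h2 : 2 < Fintype.card T := by
    rw [← Nat.card_eq_fintype_card, hT]; norm_num
  obtain ⟨x, y, w, hxy, hxw, hyw⟩ := Fintype.two_lt_card_iff.1 h2
  have key : ∀ s t : T, s ≠ 1 → t ≠ 1 → s = t := by
    intro s t hs ht
    apply Subtype.ext; apply Subtype.ext
    have hst : Commute (s : W) (t : W) := by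
      have e1 := hT2 s s.2
      have e2 := hT2 t t.2
      have e3 := hT2 _ (s * t).2
      have i1 := inv_eq_of_mul_eq_one_left e1
      have i2 := inv_eq_of_mul_eq_one_left e2
      have i3 := inv_eq_of_mul_eq_one_left e3
      rw [Subgroup.coe_mul, mul_inv_rev, i1, i2] at i3
      exact i3.symm
    exact hU _ _ (congrArg Subtype.val (hT2 s s.2)) (congrArg Subtype.val (hT2 t t.2))
      (fun h => hs (Subtype.ext (Subtype.ext h))) (fun h => ht (Subtype.ext (Subtype.ext h)))
      (hst.map W.subtype)
  by_cases hx : x = 1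
  · exact hyw (key y w (fun h => hxy (hx.trans h.symm)) (fun h => hxw (hx.trans h.symm)))
  · by_cases hy : y = 1
    · exact hxw (key x w hx (fun h => hyw (hy.trans h.symm)))
    · exact hxy (key x y hx hy)

theorem main_cover {G : Type*} [Group G] [Finite G] (ψ : G →* MulAut A5) (C W : Subgroup G)
    (hI : (MulAut.conj : A5 →* MulAut A5).range ≤ C.map ψ) (hWk : W ≤ ψ.ker) (hWC : W ≤ C)
    (hW : ∀ c ∈ C, ∀ w ∈ W, c * w * c⁻¹ ∈ W)
    {r : ℕ} (hr : r.Prime) (h7 : 7 ≤ r) (y : G) (hy : y ∈ W) (hyr : orderOf y = r)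
    (h3r : ¬ ∃ g : G, orderOf g = 3 * r) (h5r : ¬ ∃ g : G, orderOf g = 5 * r)
    (h15 : ¬ ∃ g : G, orderOf g = 15)
    (hcase : (∃ q, (q = 3 ∨ q = 5) ∧ ¬ ∃ d : G, orderOf d = 2 * q) ∨
      (∃ z : G, (∀ s ∈ C, s * s = 1 → s ≠ 1 → s = z) ∧ ∀ n ∈ W, z * n = n * z)) : False := by
  have : Fact r.Prime := ⟨hr⟩
  let S : Sylow r W := default
  set P := (S : Subgroup W).map W.subtype with hP
  have hrW : r ∣ Nat.card W := by
    have := orderOf_dvd_natCard (⟨y, hy⟩ : W)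
    rwa [Subgroup.orderOf_mk, hyr] at this
  have hPp : IsPGroup r P := S.2.map _
  have hPnt : Nontrivial P := by
    have hc : r ∣ Nat.card P := by
      have : Nat.card P = Nat.card S := Subgroup.card_map_of_injective W.subtype_injective
      rw [this, S.card_eq_multiplicity]
      apply dvd_pow_self
      have := (hr.factorization_pos_of_dvd Nat.card_pos.ne' hrW)
      omega
    rw [← Finite.one_lt_card_iff_nontrivial]
    exact lt_of_lt_of_le hr.one_lt (Nat.le_of_dvd Nat.card_pos hc)
  have hcov := frat_cover ψ C (MulAut.conj : A5 →* MulAut A5).range hI r W hWk hWC hW S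
  rw [← hP] at hcov
  refine FinL2 ψ _ P hcov hr h7 hPp inf_le_right h3r h5r h15 ?_
  rcases hcase with h | ⟨z, h1, h2⟩
  · exact Or.inl h
  · exact Or.inr ⟨z, fun s hs => h1 s hs.1, fun n hn => h2 n (Subgroup.map_subtype_le _ hn)⟩

theorem prime_ge_seven {r : ℕ} (hr : r.Prime) (h : r ∉ ({2, 3, 5} : Set ℕ)) : 7 ≤ r := by
  simp only [Set.mem_insert_iff, Set.mem_singleton_iff, not_or] at h
  by_contra h7
  have : r < 7 := by omega
  have := hr.two_le
  interval_cases r <;> first | omega | (revert hr; norm_num)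

theorem main_aux {G : Type*} [Group G] [Finite G] (hG : GoodG G)
    (h3d : 3 ∣ Nat.card G) (h5d : 5 ∣ Nat.card G)
    (h15 : ¬ ∃ g : G, orderOf g = 15)
    (q : ℕ) (hq : q.Prime) (hq2 : q ≠ 2) (hqd : q ∣ Nat.card G)
    (h2q : ¬ ∃ g : G, orderOf g = 2 * q) (r : ℕ) (hr : r.Prime) (hrd : r ∣ Nat.card G)
    (hr' : r ∉ ({2, 3, 5} : Set ℕ)) (h3r : ¬ ∃ g : G, orderOf g = 3 * r)
    (h5r : ¬ ∃ g : G, orderOf g = 5 * r) : ¬ ∃ g : G, orderOf g = 2 * r := by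
  rintro ⟨g, hg⟩
  have h7 := prime_ge_seven hr hr'
  rcases hG with hs | ⟨ψ, hs, hI⟩
  · refine lucido hs {3, 5, r} ?_ ?_ (a := 3) (b := 5) (c := r) (by simp) (by simp) (by simp)
      (by norm_num) (by omega) (by omega)
    · rintro x (rfl | rfl | rfl)
      · exact ⟨by norm_num, h3d⟩
      · exact ⟨by norm_num, h5d⟩
      · exact ⟨hr, hrd⟩
    · rintro x (rfl | rfl | rfl) y (rfl | rfl | rfl) hxy
      · exact absurd rfl hxy
      · exact h15
      · exact h3r
      · exact h15
      · exact absurd rfl hxy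
      · exact h5r
      · rwa [mul_comm]
      · rwa [mul_comm]
      · exact absurd rfl hxy
  have hker : ∀ l : ℕ, l.Prime → 7 ≤ l → ∀ x : G, orderOf x = l → x ∈ ψ.ker := by
    intro l hl hl7 x hx
    exact autA5_ord hl hl7 _ (by rw [← map_pow, ← hx, pow_orderOf_eq_one, map_one])
  have hyr : orderOf (g ^ 2) = r := by
    rw [orderOf_pow_of_dvd (by norm_num) (by rw [hg]; exact dvd_mul_right _ _), hg]; simp
  have hzr : orderOf (g ^ r) = 2 := by
    rw [orderOf_pow_of_dvd hr.ne_zero (by rw [hg]; exact dvd_mul_left _ _), hg]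
    exact Nat.mul_div_cancel _ hr.pos
  have hyk := hker r hr h7 _ hyr
  have hkn : ψ.ker.Normal := inferInstance
  by_cases hq35 : q = 3 ∨ q = 5
  · exact main_cover ψ ⊤ ψ.ker (by rw [← MonoidHom.range_eq_map]; exact hI) le_rfl le_top
      (fun c _ w hw => hkn.conj_mem _ hw _) hr h7 _ hyk hyr h3r h5r h15 (Or.inl ⟨q, hq35, h2q⟩)
  have hq7 : 7 ≤ q := prime_ge_seven hq (by
    simp only [Set.mem_insert_iff, Set.mem_singleton_iff]; tauto)
  have : Fact q.Prime := ⟨hq⟩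
  have : Fact (Nat.Prime 2) := ⟨Nat.prime_two⟩
  have hqk : q ∣ Nat.card ψ.ker := by
    obtain ⟨x, hx⟩ := exists_prime_orderOf_dvd_card' q hqd
    have := orderOf_dvd_natCard (⟨x, hker q hq hq7 x hx⟩ : ψ.ker)
    rwa [Subgroup.orderOf_mk, hx] at this
  have hU := Ulem ψ hs hI hq hq2 hqk h2q
  set z := g ^ r with hz
  have hzz : z * z = 1 := by rw [← pow_two, ← hzr, pow_orderOf_eq_one]
  have hz1 : z ≠ 1 := by
    intro h
    rw [h, orderOf_one] at hzr
    omega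
  obtain ⟨u, hu⟩ := exists_prime_orderOf_dvd_card' 2 (even_ker ψ hI hU)
  have hu2 : orderOf (u : G) = 2 := by rw [Subgroup.orderOf_coe, hu]
  have huu : (u : G) * u = 1 := by rw [← pow_two, ← hu2, pow_orderOf_eq_one]
  have hu1 : (u : G) ≠ 1 := by
    intro h
    rw [h, orderOf_one] at hu2
    omega
  have hinv : ∀ s : G, s * s = 1 → s ≠ 1 → s ∈ ψ.ker := by
    intro s hs hs1
    obtain ⟨x, hx⟩ := invol_conj hU u s huu hs hu1 hs1
    rw [← hx]
    exact hkn.conj_mem _ u.2 _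
  have hcov : (MulAut.conj : A5 →* MulAut A5).range ≤ (Subgroup.centralizer {z}).map ψ := by
    intro i hi
    obtain ⟨x, rfl⟩ := hI hi
    have hxx : (x * z * x⁻¹) * (x * z * x⁻¹) = 1 := by
      calc (x * z * x⁻¹) * (x * z * x⁻¹) = x * (z * z) * x⁻¹ := by group
        _ = 1 := by rw [hzz]; group
    have hx1 : x * z * x⁻¹ ≠ 1 := fun h => hz1 (by simpa using h)
    obtain ⟨w, hw⟩ := invol_conj (H := ψ.ker)
      (fun a b ha hb ha1 hb1 hab => Subtype.ext (hU a b (congrArg Subtype.val ha)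
        (congrArg Subtype.val hb) (fun h => ha1 (Subtype.ext h)) (fun h => hb1 (Subtype.ext h))
        (hab.map ψ.ker.subtype)))
      ⟨_, hinv _ hxx hx1⟩ ⟨z, hinv z hzz hz1⟩ (Subtype.ext hxx) (Subtype.ext hzz)
      (fun h => hx1 (congrArg Subtype.val h)) (fun h => hz1 (congrArg Subtype.val h))
    have hw' : (w : G) * (x * z * x⁻¹) * (w : G)⁻¹ = z := congrArg Subtype.val hw
    refine ⟨w * x, ?_, ?_⟩
    · rw [SetLike.mem_coe, Subgroup.mem_centralizer_singleton_iff]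
      calc (w : G) * x * z = ((w : G) * (x * z * x⁻¹) * (w : G)⁻¹) * (w * x) := by group
        _ = _ := by rw [hw']
    · rw [map_mul, (w.2 : ψ w = 1), one_mul]
  refine main_cover ψ (Subgroup.centralizer {z}) (ψ.ker ⊓ Subgroup.centralizer {z}) hcov inf_le_left
    inf_le_right ?_ hr h7 (g ^ 2) ⟨hyk, ?_⟩ hyr h3r h5r h15 (Or.inr ⟨z, ?_, ?_⟩)
  · intro c hc w hw
    exact ⟨hkn.conj_mem _ hw.1 _, Subgroup.mul_mem _ (Subgroup.mul_mem _ hc hw.2)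
      (Subgroup.inv_mem _ hc)⟩
  · change g ^ 2 ∈ Subgroup.centralizer {z}
    rw [Subgroup.mem_centralizer_singleton_iff, hz, ← pow_add, ← pow_add, add_comm]
  · intro s hs hss hs1
    exact hU s z hss hzz hs1 hz1 (Subgroup.mem_centralizer_singleton_iff.1 hs)
  · intro n hn
    exact (Subgroup.mem_centralizer_singleton_iff.1 hn.2).symm

/-- In a pseudo-solvable group with a `{p,3,5}` triangle in the prime-graph complement
and an edge `2 - q` for some odd prime `q`, no prime `r ∉ {2,3,5}` can have the
complement edges `3 - r` and `5 - r` without also having `2 - r`. -/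
theorem no_figure3c_together_with_2q_edge
    (G : Type*) [Group G] [Finite G] (hG : IsPseudoSolvable G)
    (p : ℕ) (hp : p.Prime) (hp' : p ∉ ({2, 3, 5} : Set ℕ))
    (hpd : p ∣ Nat.card G) (h3d : 3 ∣ Nat.card G) (h5d : 5 ∣ Nat.card G)
    (h3p : ¬ ∃ g : G, orderOf g = 3 * p)
    (h5p : ¬ ∃ g : G, orderOf g = 5 * p)
    (h15 : ¬ ∃ g : G, orderOf g = 15)
    (q : ℕ) (hq : q.Prime) (hq2 : q ≠ 2) (hqd : q ∣ Nat.card G)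
    (h2q : ¬ ∃ g : G, orderOf g = 2 * q) :
    ∀ r : ℕ, r.Prime → r ∣ Nat.card G → r ∉ ({2, 3, 5} : Set ℕ) →
      (¬ ∃ g : G, orderOf g = 3 * r) → (¬ ∃ g : G, orderOf g = 5 * r) →
      ¬ ∃ g : G, orderOf g = 2 * r := by
  obtain ⟨n, H, h0, hl, hs⟩ := hG
  intro r hr hrd hr' h3r h5r
  exact main_aux (good_of_pseudo n H h0 hl hs h15) h3d h5d h15 q hq hq2 hqd h2q r hr hrd hr' h3r h5r
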